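/- Let (X,T) be a topological dynamical system given by a continuous ℤ^d-action on a compact metric space and let μ be an ergodic T-invariant Borel probability measure. Then H_ap = H_ms^c = H_me; that is, for f ∈ L²(X,μ): f is almost periodic if and only if f is not μ-mean sensitive, if and only if f is μ-mean equicontinuous. -/

import Mathlib

open MeasureTheory Filter Finset Metric
open scoped Classical

noncomputable section

/-- The box `{0,…,n−1}^d` inside `ℤ^d`. -/
def Fbox (d n : ℕ) : Finset (Fin d → ℤ) :=
  Fintype.piFinset fun _ => Finset.Icc (0 : ℤ) ((n : ℤ) - 1)

/-- Upper density of a subset of `ℤ^d` along the boxes `F_n`. -/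
def upperDensity (d : ℕ) (S : Set (Fin d → ℤ)) : ℝ :=
  Filter.limsup
    (fun n : ℕ => (((Fbox d n).filter (fun j => j ∈ S)).card : ℝ) / ((Fbox d n).card : ℝ))
    Filter.atTop

/-- Lower density of a subset of `ℤ^d` along the boxes `F_n`. -/
def lowerDensity (d : ℕ) (S : Set (Fin d → ℤ)) : ℝ :=
  Filter.liminf
    (fun n : ℕ => (((Fbox d n).filter (fun j => j ∈ S)).card : ℝ) / ((Fbox d n).card : ℝ))
    Filter.atTop

variable {X : Type*}

/-- The pseudometric `d_f(x,y) = limsup_n ((1/|F_n|) Σ_{j∈F_n} |f(T^j x) − f(T^j y)|²)^{1/2}`. -/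
def dF {d : ℕ} (T : (Fin d → ℤ) → X → X) (f : X → ℂ) (x y : X) : ℝ :=
  Filter.limsup (fun n : ℕ =>
    Real.sqrt ((∑ j ∈ Fbox d n, ‖f (T j x) - f (T j y)‖ ^ 2) / ((Fbox d n).card : ℝ)))
    Filter.atTop

/-- The pseudometric `ρ_f(x,y) = inf {ε > 0 : D̄({i : |f(T^i x) − f(T^i y)| > ε}) < ε}`. -/
def rhoF {d : ℕ} (T : (Fin d → ℤ) → X → X) (f : X → ℂ) (x y : X) : ℝ :=
  sInf {ε : ℝ | 0 < ε ∧ upperDensity d {i | ε < ‖f (T i x) - f (T i y)‖} < ε}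

/-- `x` is a generic point for `|f|²`:
the Birkhoff averages of `|f|²` along `x` converge to `∫ |f|² dμ`. -/
def genericSq {d : ℕ} [MeasurableSpace X] (μ : Measure X) (T : (Fin d → ℤ) → X → X)
    (f : X → ℂ) (x : X) : Prop :=
  Filter.Tendsto
    (fun n : ℕ => (∑ j ∈ Fbox d n, ‖f (T j x)‖ ^ 2) / ((Fbox d n).card : ℝ))
    Filter.atTop (nhds (∫ y, ‖f y‖ ^ 2 ∂μ))

/-- `ε` is a `μ`-sensitivity constant for `f`: every positive measure set contains two
generic points `x, y` with `d_f(x,y) > ε`. -/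
def SensitivityConstant {d : ℕ} [MeasurableSpace X] (μ : Measure X)
    (T : (Fin d → ℤ) → X → X) (f : X → ℂ) (ε : ℝ) : Prop :=
  0 < ε ∧ ∀ A : Set X, MeasurableSet A → 0 < μ A →
    ∃ x ∈ A, ∃ y ∈ A, genericSq μ T f x ∧ genericSq μ T f y ∧ ε < dF T f x y

/-- `f` is `μ`-mean sensitive (`f ∈ H_ms`). -/
def MeanSensitiveFun {d : ℕ} [MeasurableSpace X] (μ : Measure X)
    (T : (Fin d → ℤ) → X → X) (f : X → ℂ) : Prop :=
  ∃ ε : ℝ, SensitivityConstant μ T f ε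

/-- `f` is almost periodic (`f ∈ H_ap`): the closure of the orbit `{f ∘ T^j : j ∈ ℤ^d}`
in `L²(X,μ)` is compact. -/
def APFun {d : ℕ} [MeasurableSpace X] (μ : Measure X)
    (T : (Fin d → ℤ) → X → X) (f : X → ℂ) : Prop :=
  IsCompact (closure {g : Lp ℂ 2 μ | ∃ j : Fin d → ℤ, (g : X → ℂ) =ᵐ[μ] f ∘ T j})

/-- `(X,T)` is `μ-f`-mean equicontinuous. -/
def MuFMeanEquicont {d : ℕ} [MetricSpace X] [MeasurableSpace X] (μ : Measure X)
    (T : (Fin d → ℤ) → X → X) (f : X → ℂ) : Prop :=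
  ∀ τ : ℝ, 0 < τ → ∃ M : Set X, IsCompact M ∧ 1 - ENNReal.ofReal τ ≤ μ M ∧
    ∀ ε : ℝ, 0 < ε → ∃ δ : ℝ, 0 < δ ∧
      ∀ x ∈ M, ∀ y ∈ M, dist x y ≤ δ → rhoF T f x y ≤ ε

/-!
All three properties are equivalent to the existence, for every `ε > 0`, of a set `A` of positive
measure and `ρ_f`-diameter at most `ε`.

* By Chebyshev's inequality `ρ_f` is small where `d_f` is, so such sets exist when `f` is not mean
  sensitive. Small pieces of the compact sets from mean equicontinuity also provide them.
* `ρ_f` is invariant under the diagonal action and by ergodicity almost every point is carried into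
  `A` by some `T^j`. A measurable choice of `j` is continuous on a large compact set by Lusin's
  theorem, hence locally constant there, which gives mean equicontinuity.
* If the orbit of `f` is not totally bounded, it has an infinite separated sequence `f ∘ T^{j_k}`.
  By Poincaré's pigeonhole argument some typical `x` has `T^{j_m} x, T^{j_n} x ∈ A` with `m ≠ n`,
  and the pointwise ergodic theorem along the orbit of `x` turns `ρ_f (T^{j_m} x, T^{j_n} x) ≤ ε`
  into `f ∘ T^{j_m}` being close to `f ∘ T^{j_n}` in measure, so in `L²` by uniform integrability.
* If `f` is almost periodic, a finite net of its orbit takes nearly equal values on the pairs of a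
  coupling `ρ ≪ μ × μ` of `μ` with itself, so `d_f²` has small `ρ`-integral by the pointwise ergodic
  theorem for the (not necessarily ergodic) diagonal action on `μ × μ`. Hence `d_f(x, ·)` is small
  on a set of positive measure for some `x`.

The pointwise ergodic theorem along the boxes `F_n` combines a covering proof of the maximal
inequality with the `L²` decomposition into invariant functions and coboundaries.
-/

section Boxes

variable {d : ℕ}

theorem mem_Fbox {n : ℕ} {j : Fin d → ℤ} : j ∈ Fbox d n ↔ ∀ k, 0 ≤ j k ∧ j k < n := by
  simp only [Fbox, Fintype.mem_piFinset, Finset.mem_Icc, Int.le_sub_one_iff]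

theorem card_Fbox (d n : ℕ) : #(Fbox d n) = n ^ d := by
  simp [Fbox, Fintype.card_piFinset]

theorem card_Fbox_pos {n : ℕ} (hn : 0 < n) : 0 < #(Fbox d n) := by
  rw [card_Fbox]
  positivity

theorem map_add_Fbox_subset {m n : ℕ} {j : Fin d → ℤ} (hj : j ∈ Fbox d n) :
    (Fbox d m).map (addRightEmbedding j) ⊆ Fbox d (m + n) := by
  intro i hi
  obtain ⟨l, hl, rfl⟩ := Finset.mem_map.1 hi
  refine mem_Fbox.2 fun k => ?_
  have := mem_Fbox.1 hl k
  have := mem_Fbox.1 hj k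
  simp only [addRightEmbedding_apply, Pi.add_apply]
  omega

theorem card_Fbox_inter_map_add (n : ℕ) (j : Fin d → ℤ) :
    #(Fbox d n ∩ (Fbox d n).map (addRightEmbedding j)) = ∏ k, (n - (j k).natAbs) := by
  have h : Fbox d n ∩ (Fbox d n).map (addRightEmbedding j) =
      Fintype.piFinset fun k => Finset.Ico (max 0 (j k)) (min (n : ℤ) (n + j k)) := by
    ext i
    have hi : i ∈ (Fbox d n).map (addRightEmbedding j) ↔ i - j ∈ Fbox d n := by
      simp [← eq_sub_iff_add_eq]
    simp only [Finset.mem_inter, hi, mem_Fbox, Fintype.mem_piFinset, Finset.mem_Ico,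
      Pi.sub_apply, ← forall_and]
    exact forall_congr' fun k => by omega
  rw [h, Fintype.card_piFinset]
  exact Finset.prod_congr rfl fun k _ => by rw [Int.card_Ico]; omega

theorem tendsto_natCast_sub_div_natCast (m : ℕ) :
    Tendsto (fun n : ℕ => ((n - m : ℕ) : ℝ) / n) atTop (nhds 1) := by
  have h : Tendsto (fun n : ℕ => 1 - (m : ℝ) / n) atTop (nhds 1) := by
    simpa using (tendsto_const_div_atTop_nhds_zero_nat (m : ℝ)).const_sub 1
  refine h.congr' ?_
  filter_upwards [eventually_ge_atTop m, eventually_gt_atTop 0] with n hmn hn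
  rw [Nat.cast_sub hmn, sub_div, div_self (by positivity)]

theorem tendsto_card_Fbox_sdiff_map_add (j : Fin d → ℤ) :
    Tendsto (fun n => (#(Fbox d n \ (Fbox d n).map (addRightEmbedding j)) : ℝ) / #(Fbox d n))
      atTop (nhds 0) := by
  have h : Tendsto (fun n : ℕ => 1 - ∏ k, ((n - (j k).natAbs : ℕ) : ℝ) / n) atTop (nhds 0) := by
    simpa using (tendsto_finsetProd (Finset.univ : Finset (Fin d)) fun k _ =>
      tendsto_natCast_sub_div_natCast (j k).natAbs).const_sub 1
  refine h.congr' ?_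
  filter_upwards [eventually_gt_atTop 0] with n hn
  have hcard := Finset.card_sdiff_add_card_inter (Fbox d n) ((Fbox d n).map (addRightEmbedding j))
  rw [card_Fbox_inter_map_add] at hcard
  have hpos : (0 : ℝ) < #(Fbox d n) := by exact_mod_cast card_Fbox_pos hn
  have hsum : (#(Fbox d n \ (Fbox d n).map (addRightEmbedding j)) : ℝ) +
      ∏ k, ((n - (j k).natAbs : ℕ) : ℝ) = #(Fbox d n) := by exact_mod_cast hcard
  have hpow : (n : ℝ) ^ d = #(Fbox d n) := by rw [card_Fbox, Nat.cast_pow]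
  rw [Finset.prod_div_distrib, Finset.prod_const, Finset.card_univ, Fintype.card_fin, hpow,
    one_sub_div hpos.ne', ← hsum, add_sub_cancel_right]

/-- The average of a function on `ℤ^d` over the box `F_n`, as a linear functional. It is `0` when
the box is empty, that is for `n = 0 < d`. -/
def boxAverage (n : ℕ) : ((Fin d → ℤ) → ℝ) →ₗ[ℝ] ℝ where
  toFun a := (∑ j ∈ Fbox d n, a j) / #(Fbox d n)
  map_add' a b := by simp only [Pi.add_apply, Finset.sum_add_distrib, add_div]
  map_smul' c a := by
    simp only [Pi.smul_apply, smul_eq_mul, ← Finset.mul_sum, mul_div_assoc, RingHom.id_apply]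

theorem boxAverage_apply (n : ℕ) (a : (Fin d → ℤ) → ℝ) :
    boxAverage n a = (∑ j ∈ Fbox d n, a j) / #(Fbox d n) :=
  rfl

theorem boxAverage_mono (n : ℕ) {a b : (Fin d → ℤ) → ℝ} (h : ∀ j, a j ≤ b j) :
    boxAverage n a ≤ boxAverage n b :=
  div_le_div_of_nonneg_right (Finset.sum_le_sum fun j _ => h j) (Nat.cast_nonneg _)

theorem boxAverage_nonneg (n : ℕ) {a : (Fin d → ℤ) → ℝ} (h : ∀ j, 0 ≤ a j) :
    0 ≤ boxAverage n a :=
  div_nonneg (Finset.sum_nonneg fun j _ => h j) (Nat.cast_nonneg _)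

theorem abs_boxAverage_le (n : ℕ) (a : (Fin d → ℤ) → ℝ) :
    |boxAverage n a| ≤ boxAverage n fun j => |a j| := by
  rw [boxAverage_apply, abs_div, Nat.abs_cast]
  exact div_le_div_of_nonneg_right (Finset.abs_sum_le_sum_abs _ _) (Nat.cast_nonneg _)

theorem boxAverage_const {n : ℕ} (hn : 0 < n) (c : ℝ) :
    boxAverage n (fun _ : Fin d → ℤ => c) = c := by
  have hpos : (#(Fbox d n) : ℝ) ≠ 0 := by exact_mod_cast (card_Fbox_pos hn).ne'
  rw [boxAverage_apply, Finset.sum_const, nsmul_eq_mul, mul_div_cancel_left₀ _ hpos]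

theorem ofReal_boxAverage (n : ℕ) {a : (Fin d → ℤ) → ℝ} (h : ∀ j, 0 ≤ a j) :
    ENNReal.ofReal (boxAverage n a) = (∑ j ∈ Fbox d n, ENNReal.ofReal (a j)) / #(Fbox d n) := by
  rcases (Fbox d n).eq_empty_or_nonempty with h0 | h0
  · simp [boxAverage_apply, h0]
  · rw [boxAverage_apply, ENNReal.ofReal_div_of_pos (by exact_mod_cast h0.card_pos),
      ENNReal.ofReal_sum_of_nonneg fun j _ => h j, ENNReal.ofReal_natCast]

theorem tendsto_boxAverage_sub_translate {a : (Fin d → ℤ) → ℝ} {C : ℝ} (hC : ∀ i, |a i| ≤ C)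
    (j : Fin d → ℤ) :
    Tendsto (fun n => boxAverage n fun i => a i - a (i + j)) atTop (nhds 0) := by
  have hlim : Tendsto (fun n => 2 * C *
      ((#(Fbox d n \ (Fbox d n).map (addRightEmbedding j)) : ℝ) / #(Fbox d n))) atTop (nhds 0) := by
    simpa using (tendsto_card_Fbox_sdiff_map_add j).const_mul (2 * C)
  refine squeeze_zero_norm (fun n => ?_) hlim
  set F := Fbox d n
  set F' := F.map (addRightEmbedding j) with hF'
  have hsum : ∑ i ∈ F, (a i - a (i + j)) = ∑ i ∈ F \ F', a i - ∑ i ∈ F' \ F, a i := by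
    simp [Finset.sum_sub_distrib, Finset.sum_sdiff_sub_sum_sdiff, hF']
  have hcard : #(F' \ F) = #(F \ F') := Finset.card_sdiff_comm (by simp [hF'])
  have hbound (s : Finset (Fin d → ℤ)) : |∑ i ∈ s, a i| ≤ #s * C := by
    simpa using norm_sum_le_of_le s fun i _ => (Real.norm_eq_abs _).trans_le (hC i)
  rw [boxAverage_apply, Real.norm_eq_abs, abs_div, Nat.abs_cast, ← mul_div_assoc, hsum]
  gcongr
  calc |∑ i ∈ F \ F', a i - ∑ i ∈ F' \ F, a i|
      ≤ |∑ i ∈ F \ F', a i| + |∑ i ∈ F' \ F, a i| := abs_sub _ _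
    _ ≤ #(F \ F') * C + #(F' \ F) * C := add_le_add (hbound _) (hbound _)
    _ = 2 * C * #(F \ F') := by rw [hcard]; ring

end Boxes

section Actions

/-- A measure-preserving action of an additive group `G`. The identity element is not required to
act as the identity map; it only acts as an idempotent. -/
structure IsMeasurePreservingAction {G Ω : Type*} [Add G] [MeasurableSpace Ω] (S : G → Ω → Ω)
    (ν : Measure Ω) : Prop where
  measurePreserving : ∀ j, MeasurePreserving (S j) ν ν
  add : ∀ i j, S (i + j) = S i ∘ S j

namespace IsMeasurePreservingAction

variable {G Ω : Type*} [Add G] [MeasurableSpace Ω] {S : G → Ω → Ω} {ν : Measure Ω}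

theorem add_apply (hS : IsMeasurePreservingAction S ν) (i j : G) (x : Ω) :
    S (i + j) x = S i (S j x) :=
  congrFun (hS.add i j) x

theorem ae_forall [Countable G] (hS : IsMeasurePreservingAction S ν) {p : Ω → Prop}
    (hp : ∀ᵐ x ∂ν, p x) : ∀ᵐ x ∂ν, ∀ j, p (S j x) :=
  ae_all_iff.2 fun j => (hS.measurePreserving j).quasiMeasurePreserving.ae hp

theorem prodMap {Ω' : Type*} [MeasurableSpace Ω'] {S' : G → Ω' → Ω'} {ν' : Measure Ω'} [SFinite ν]
    [SFinite ν'] (hS : IsMeasurePreservingAction S ν) (hS' : IsMeasurePreservingAction S' ν') :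
    IsMeasurePreservingAction (fun j => Prod.map (S j) (S' j)) (ν.prod ν') where
  measurePreserving j := (hS.measurePreserving j).prod (hS'.measurePreserving j)
  add i j := by simp only [hS.add, hS'.add, Prod.map_comp_map]

theorem aemeasurable_comp {β : Type*} [MeasurableSpace β] (hS : IsMeasurePreservingAction S ν)
    {g : Ω → β} (hg : AEMeasurable g ν) (j : G) : AEMeasurable (fun x => g (S j x)) ν :=
  hg.comp_quasiMeasurePreserving (hS.measurePreserving j).quasiMeasurePreserving

theorem lintegral_comp (hS : IsMeasurePreservingAction S ν) {g : Ω → ENNReal}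
    (hg : AEMeasurable g ν) (j : G) : ∫⁻ x, g (S j x) ∂ν = ∫⁻ x, g x ∂ν := by
  have hj := hS.measurePreserving j
  rw [← lintegral_map' (by rwa [hj.map_eq]) hj.aemeasurable, hj.map_eq]

end IsMeasurePreservingAction

/-- An ergodic measure-preserving action on a probability space. -/
structure IsErgodicAction {G Ω : Type*} [Add G] [MeasurableSpace Ω] (S : G → Ω → Ω)
    (ν : Measure Ω) : Prop extends IsMeasurePreservingAction S ν where
  measure_eq_zero_or_one : ∀ A, MeasurableSet A → (∀ j, S j ⁻¹' A = A) → ν A = 0 ∨ ν A = 1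

theorem IsErgodicAction.ae_exists_mem {G Ω : Type*} [AddGroup G] [Countable G] [MeasurableSpace Ω]
    {S : G → Ω → Ω} {ν : Measure Ω} [IsProbabilityMeasure ν] (hS : IsErgodicAction S ν) {A : Set Ω}
    (hA : MeasurableSet A) (hpos : 0 < ν A) : ∀ᵐ x ∂ν, ∃ j, S j x ∈ A := by
  have hmeas : MeasurableSet (⋃ j, S j ⁻¹' A) :=
    .iUnion fun j => (hS.measurePreserving j).measurable hA
  have hinv (i : G) : S i ⁻¹' (⋃ j, S j ⁻¹' A) = ⋃ j, S j ⁻¹' A := by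
    simp only [Set.preimage_iUnion, ← Set.preimage_comp, ← hS.add]
    exact (Equiv.addRight i).iSup_comp (g := fun j => S j ⁻¹' A)
  have hne : ν (⋃ j, S j ⁻¹' A) ≠ 0 := by
    refine (hpos.trans_le ?_).ne'
    rw [← (hS.measurePreserving 0).measure_preimage hA.nullMeasurableSet]
    exact measure_mono (Set.subset_iUnion (fun j => S j ⁻¹' A) 0)
  have hfull := (hS.measure_eq_zero_or_one _ hmeas hinv).resolve_left hne
  filter_upwards [(mem_ae_iff_prob_eq_one hmeas).2 hfull] with x hx
  exact Set.mem_iUnion.1 hx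

end Actions

section MaximalInequality

variable {d : ℕ}

theorem exists_pairwiseDisjoint_boxes_card_le (E : Finset (Fin d → ℤ)) {r : (Fin d → ℤ) → ℕ}
    (hr : ∀ j ∈ E, (Fbox d (r j)).Nonempty) :
    ∃ U ⊆ E, (U : Set (Fin d → ℤ)).PairwiseDisjoint
        (fun j => (Fbox d (r j)).map (addRightEmbedding j)) ∧
      #E ≤ 3 ^ d * ∑ j ∈ U, #(Fbox d (r j)) := by
  set B : (Fin d → ℤ) → Finset (Fin d → ℤ) := fun j => (Fbox d (r j)).map (addRightEmbedding j)
  obtain ⟨u, huE, hdisj, hcover⟩ := Vitali.exists_disjoint_subfamily_covering_enlargement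
    (fun j => (B j : Set (Fin d → ℤ))) (E : Set (Fin d → ℤ)) (fun j => (r j : ℝ)) 2 one_lt_two
    (fun _ _ => Nat.cast_nonneg _) (∑ j ∈ E, (r j : ℝ))
    (fun j hj => Finset.single_le_sum (f := fun j => (r j : ℝ)) (fun _ _ => Nat.cast_nonneg _) hj)
    (fun j hj => Finset.coe_nonempty.2 ((hr j hj).map))
  lift u to Finset (Fin d → ℤ) using E.finite_toSet.subset huE
  set Q : (Fin d → ℤ) → Finset (Fin d → ℤ) := fun b =>
    Fintype.piFinset fun k => Finset.Ioc (b k - 2 * r b) (b k + r b)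
  have hQ (b : Fin d → ℤ) : #(Q b) = 3 ^ d * #(Fbox d (r b)) := by
    have (k : Fin d) : (b k + r b - (b k - 2 * r b)).toNat = 3 * r b := by omega
    simp only [Q, Fintype.card_piFinset, Int.card_Ioc, this, Finset.prod_const, Finset.card_univ,
      Fintype.card_fin, mul_pow, card_Fbox]
  have hEQ : E ⊆ u.biUnion Q := by
    intro a ha
    obtain ⟨b, hb, ⟨z, hza, hzb⟩, hab⟩ := hcover a ha
    have hab : r a ≤ 2 * r b := by exact_mod_cast hab
    obtain ⟨i, hi, rfl⟩ := Finset.mem_map.1 (Finset.mem_coe.1 hza)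
    obtain ⟨i', hi', hii'⟩ := Finset.mem_map.1 (Finset.mem_coe.1 hzb)
    refine Finset.mem_biUnion.2 ⟨b, hb, Fintype.mem_piFinset.2 fun k => Finset.mem_Ioc.2 ?_⟩
    have := mem_Fbox.1 hi k
    have := mem_Fbox.1 hi' k
    have := congrFun hii' k
    simp only [addRightEmbedding_apply, Pi.add_apply] at this
    omega
  refine ⟨u, Finset.coe_subset.1 huE, fun i hi j hj hij =>
    Finset.disjoint_coe.1 (hdisj hi hj hij), ?_⟩
  calc #E ≤ ∑ b ∈ u, #(Q b) := (Finset.card_le_card hEQ).trans Finset.card_biUnion_le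
    _ = 3 ^ d * ∑ b ∈ u, #(Fbox d (r b)) := by simp only [hQ, Finset.mul_sum]

theorem mul_card_le_of_forall_mul_card_Fbox_le (φ : (Fin d → ℤ) → ENNReal) (lam : ENNReal)
    (E : Finset (Fin d → ℤ)) {F : Finset (Fin d → ℤ)} {r : (Fin d → ℤ) → ℕ}
    (hr : ∀ j ∈ E, (Fbox d (r j)).Nonempty)
    (hF : ∀ j ∈ E, (Fbox d (r j)).map (addRightEmbedding j) ⊆ F)
    (hφ : ∀ j ∈ E, lam * #(Fbox d (r j)) ≤ ∑ i ∈ Fbox d (r j), φ (i + j)) :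
    lam * #E ≤ 3 ^ d * ∑ i ∈ F, φ i := by
  obtain ⟨U, hUE, hdisj, hcard⟩ := exists_pairwiseDisjoint_boxes_card_le E hr
  calc lam * #E ≤ lam * (3 ^ d * ∑ j ∈ U, (#(Fbox d (r j)) : ENNReal)) := by
        gcongr
        exact_mod_cast hcard
    _ = 3 ^ d * ∑ j ∈ U, lam * #(Fbox d (r j)) := by rw [← Finset.mul_sum, mul_left_comm]
    _ ≤ 3 ^ d * ∑ j ∈ U, ∑ i ∈ (Fbox d (r j)).map (addRightEmbedding j), φ i := by
        gcongr with j hj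
        simpa using hφ j (hUE hj)
    _ = 3 ^ d * ∑ i ∈ U.biUnion fun j => (Fbox d (r j)).map (addRightEmbedding j), φ i := by
        rw [Finset.sum_biUnion hdisj]
    _ ≤ 3 ^ d * ∑ i ∈ F, φ i := by
        gcongr
        exact Finset.biUnion_subset.2 fun j hj => hF j (hUE hj)

variable {Ω : Type*} {S : (Fin d → ℤ) → Ω → Ω}

/-- The maximal function `sup_n (1/|F_n|) Σ_{j∈F_n} g(S^j x)` of the ergodic averages of `g`. -/
def maximalFunction (S : (Fin d → ℤ) → Ω → Ω) (g : Ω → ENNReal) (x : Ω) : ENNReal :=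
  ⨆ n, (∑ j ∈ Fbox d n, g (S j x)) / #(Fbox d n)

variable [MeasurableSpace Ω] {ν : Measure Ω}

theorem aemeasurable_sum_comp_div (hS : IsMeasurePreservingAction S ν) {g : Ω → ENNReal}
    (hg : AEMeasurable g ν) (n : ℕ) :
    AEMeasurable (fun x => (∑ j ∈ Fbox d n, g (S j x)) / #(Fbox d n)) ν :=
  (Finset.aemeasurable_fun_sum _ fun j _ => hS.aemeasurable_comp hg j).div_const _

theorem mul_sum_indicator_le_of_lt_average (hS : IsMeasurePreservingAction S ν) (g : Ω → ENNReal)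
    (lam : ENNReal) {N : ℕ} {E : Set Ω}
    (hE : ∀ x ∈ E, ∃ n ≤ N, lam < (∑ j ∈ Fbox d n, g (S j x)) / #(Fbox d n)) (x : Ω) :
    lam * ∑ j ∈ Fbox d N, E.indicator 1 (S j x) ≤ 3 ^ d * ∑ i ∈ Fbox d (2 * N), g (S i x) := by
  have hr (j : Fin d → ℤ) : ∃ n : ℕ, S j x ∈ E → n ≤ N ∧ (Fbox d n).Nonempty ∧
      lam * #(Fbox d n) ≤ ∑ i ∈ Fbox d n, g (S (i + j) x) := by
    by_cases hj : S j x ∈ E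
    · obtain ⟨n, hnN, hn⟩ := hE _ hj
      refine ⟨n, fun _ => ⟨hnN, Finset.nonempty_iff_ne_empty.2 ?_, ?_⟩⟩
      · intro h
        simp [h] at hn
      · simpa only [hS.add_apply] using ENNReal.mul_le_of_le_div hn.le
    · exact ⟨0, fun h => absurd h hj⟩
  choose r hr using hr
  have hcount : ∑ j ∈ Fbox d N, E.indicator 1 (S j x) =
      (#{j ∈ Fbox d N | S j x ∈ E} : ENNReal) := by
    simp [Set.indicator_apply]
  rw [hcount]
  refine mul_card_le_of_forall_mul_card_Fbox_le _ lam _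
    (fun j hj => (hr j (Finset.mem_filter.1 hj).2).2.1) (fun j hj => ?_)
    (fun j hj => (hr j (Finset.mem_filter.1 hj).2).2.2)
  obtain ⟨hjN, hjE⟩ := Finset.mem_filter.1 hj
  refine (map_add_Fbox_subset hjN).trans fun i hi => mem_Fbox.2 fun k => ?_
  have := mem_Fbox.1 hi k
  have := (hr j hjE).1
  omega

theorem mul_measure_exists_le_lt_average_le (hS : IsMeasurePreservingAction S ν)
    {g : Ω → ENNReal} (hg : AEMeasurable g ν) (lam : ENNReal) {N : ℕ} (hN : 0 < N) :
    lam * ν {x | ∃ n ≤ N, lam < (∑ j ∈ Fbox d n, g (S j x)) / #(Fbox d n)} ≤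
      6 ^ d * ∫⁻ x, g x ∂ν := by
  set E := {x | ∃ n ≤ N, lam < (∑ j ∈ Fbox d n, g (S j x)) / (#(Fbox d n) : ENNReal)} with hE
  have hEmeas : NullMeasurableSet E ν := by
    have hunion : E = ⋃ n, ⋃ _ : n ≤ N,
        (fun x => (∑ j ∈ Fbox d n, g (S j x)) / (#(Fbox d n) : ENNReal)) ⁻¹' Set.Ioi lam := by
      ext x
      simp [hE]
    rw [hunion]
    exact .iUnion fun n => .iUnion fun _ =>
      (aemeasurable_sum_comp_div hS hg n).nullMeasurableSet_preimage measurableSet_Ioi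
  have hind : AEMeasurable (E.indicator (1 : Ω → ENNReal)) ν :=
    (aemeasurable_indicator_const_iff 1).2 hEmeas
  have hsum {u : Ω → ENNReal} (hu : AEMeasurable u ν) (n : ℕ) :
      ∫⁻ x, ∑ j ∈ Fbox d n, u (S j x) ∂ν = #(Fbox d n) * ∫⁻ x, u x ∂ν := by
    simp_rw [lintegral_finsetSum' _ fun j _ => hS.aemeasurable_comp hu j, hS.lintegral_comp hu,
      Finset.sum_const, nsmul_eq_mul]
  have hint : lam * (#(Fbox d N) * ν E) ≤ 3 ^ d * (#(Fbox d (2 * N)) * ∫⁻ x, g x ∂ν) := by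
    have := lintegral_mono (μ := ν) fun x =>
      mul_sum_indicator_le_of_lt_average hS g lam (N := N) (E := E) (fun _ h => h) x
    have hindsum := Finset.aemeasurable_fun_sum (Fbox d N) fun j _ => hS.aemeasurable_comp hind j
    have hgsum := Finset.aemeasurable_fun_sum (Fbox d (2 * N)) fun j _ => hS.aemeasurable_comp hg j
    rwa [lintegral_const_mul'' _ hindsum, lintegral_const_mul'' _ hgsum, hsum hind, hsum hg,
      lintegral_indicator_one₀ hEmeas] at this
  have hbox : #(Fbox d (2 * N)) = 2 ^ d * #(Fbox d N) := by simp only [card_Fbox, mul_pow]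
  refine (ENNReal.mul_le_mul_iff_right (Nat.cast_ne_zero.2 (card_Fbox_pos hN).ne')
    (ENNReal.natCast_ne_top #(Fbox d N))).1 ?_
  calc #(Fbox d N) * (lam * ν E) = lam * (#(Fbox d N) * ν E) := mul_left_comm _ _ _
    _ ≤ 3 ^ d * (#(Fbox d (2 * N)) * ∫⁻ x, g x ∂ν) := hint
    _ = #(Fbox d N) * (6 ^ d * ∫⁻ x, g x ∂ν) := by
        rw [hbox, show (6 : ENNReal) = 3 * 2 by norm_num, mul_pow]
        push_cast
        ring

theorem mul_measure_lt_maximalFunction_le (hS : IsMeasurePreservingAction S ν)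
    {g : Ω → ENNReal} (hg : AEMeasurable g ν) (lam : ENNReal) :
    lam * ν {x | lam < maximalFunction S g x} ≤ 6 ^ d * ∫⁻ x, g x ∂ν := by
  have hmono : Monotone fun N =>
      {x | ∃ n ≤ N + 1, lam < (∑ j ∈ Fbox d n, g (S j x)) / (#(Fbox d n) : ENNReal)} :=
    fun _ _ hab _ ⟨n, hn, h⟩ => ⟨n, hn.trans (Nat.succ_le_succ hab), h⟩
  have hunion : {x | lam < maximalFunction S g x} =
      ⋃ N, {x | ∃ n ≤ N + 1, lam < (∑ j ∈ Fbox d n, g (S j x)) / (#(Fbox d n) : ENNReal)} := by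
    ext x
    simp only [maximalFunction, lt_iSup_iff, Set.mem_ofPred_eq, Set.mem_iUnion]
    exact ⟨fun ⟨n, h⟩ => ⟨n, n, n.le_succ, h⟩, fun ⟨_, n, _, h⟩ => ⟨n, h⟩⟩
  rw [hunion, hmono.measure_iUnion, ENNReal.mul_iSup]
  exact iSup_le fun N => mul_measure_exists_le_lt_average_le hS hg lam N.succ_pos

end MaximalInequality

section PointwiseErgodicTheorem

variable {d : ℕ} {Ω : Type*} {S : (Fin d → ℤ) → Ω → Ω}

theorem enorm_boxAverage_le_maximalFunction (u : Ω → ℝ) (n : ℕ) (x : Ω) :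
    ‖boxAverage n fun j => u (S j x)‖ₑ ≤ maximalFunction S (fun y => ‖u y‖ₑ) x := by
  refine le_trans ?_ (le_iSup (fun n => (∑ j ∈ Fbox d n, ‖u (S j x)‖ₑ) / #(Fbox d n)) n)
  simp only [Real.enorm_eq_ofReal_abs]
  rw [← ofReal_boxAverage n fun j => abs_nonneg _]
  exact ENNReal.ofReal_le_ofReal (abs_boxAverage_le n _)

variable [mΩ : MeasurableSpace Ω] {ν : Measure Ω}

/-- The σ-algebra of the measurable sets that are invariant under every map of the family `S`. -/
@[reducible] def invariantSigmaAlgebra (S : (Fin d → ℤ) → Ω → Ω) : MeasurableSpace Ω :=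
  ⨅ j, MeasurableSpace.invariants (S j)

theorem measurableSet_invariantSigmaAlgebra {A : Set Ω} :
    MeasurableSet[invariantSigmaAlgebra S] A ↔ MeasurableSet A ∧ ∀ j, S j ⁻¹' A = A := by
  rw [invariantSigmaAlgebra, MeasurableSpace.measurableSet_iInf]
  simp only [MeasurableSpace.measurableSet_invariants, forall_and, forall_const]

theorem invariantSigmaAlgebra_le : invariantSigmaAlgebra S ≤ mΩ :=
  fun _ hA => (measurableSet_invariantSigmaAlgebra.1 hA).1

theorem condExp_comp_invariantSigmaAlgebra [IsFiniteMeasure ν] (hS : IsMeasurePreservingAction S ν)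
    {h : Ω → ℝ} (hh : Integrable h ν) (j : Fin d → ℤ) :
    ν[fun x => h (S j x) | invariantSigmaAlgebra S] =ᵐ[ν] ν[h | invariantSigmaAlgebra S] := by
  refine (ae_eq_condExp_of_forall_setIntegral_eq invariantSigmaAlgebra_le
    ((hS.measurePreserving j).integrable_comp_of_integrable hh)
    (fun _ _ _ => integrable_condExp.integrableOn) (fun A hA _ => ?_)
    stronglyMeasurable_condExp.aestronglyMeasurable).symm
  obtain ⟨hAmeas, hAinv⟩ := measurableSet_invariantSigmaAlgebra.1 hA
  have hj := hS.measurePreserving j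
  calc ∫ x in A, (ν[h | invariantSigmaAlgebra S]) x ∂ν
      = ∫ x in A, h x ∂ν.map (S j) := by
        rw [setIntegral_condExp invariantSigmaAlgebra_le hh hA, hj.map_eq]
    _ = ∫ x in S j ⁻¹' A, h (S j x) ∂ν := setIntegral_map hAmeas
        (by rw [hj.map_eq]; exact hh.aestronglyMeasurable) hj.aemeasurable
    _ = ∫ x in A, h (S j x) ∂ν := by rw [hAinv j]

theorem condExp_eq_self_of_forall_comp_ae_eq [IsFiniteMeasure ν]
    (hS : IsMeasurePreservingAction S ν) {w : Ω → ℝ} (hw : Integrable w ν)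
    (hinv : ∀ j, (fun x => w (S j x)) =ᵐ[ν] w) : ν[w | invariantSigmaAlgebra S] =ᵐ[ν] w := by
  obtain ⟨w', hw', hww'⟩ := hw.aemeasurable
  set v : Ω → ℝ := fun x => ⨆ j, w' (S j x)
  have hvinv (i : Fin d → ℤ) (x : Ω) : v (S i x) = v x := by
    simp only [v, ← hS.add_apply]
    exact (Equiv.addRight i).iSup_comp (g := fun j => w' (S j x))
  have hv : Measurable v := Measurable.iSup fun j => hw'.comp (hS.measurePreserving j).measurable
  have hv' : Measurable[invariantSigmaAlgebra S] v := fun B hB =>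
    measurableSet_invariantSigmaAlgebra.2 ⟨hv hB, fun j => by ext x; simp [hvinv]⟩
  have hwv : w =ᵐ[ν] v := by
    filter_upwards [hS.ae_forall hww', ae_all_iff.2 hinv] with x hx hxinv
    simp only [v, ← hx, hxinv, ciSup_const]
  exact condExp_of_aestronglyMeasurable' invariantSigmaAlgebra_le
    ⟨v, hv'.stronglyMeasurable, hwv⟩ hw

/-- The ergodic averages of `g` over the boxes `F_n` converge almost everywhere to the conditional
expectation of `g` given the invariant σ-algebra. -/
def AveragesConvergeAE (S : (Fin d → ℤ) → Ω → Ω) (ν : Measure Ω) (g : Ω → ℝ) : Prop :=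
  ∀ᵐ x ∂ν, Tendsto (fun n => boxAverage n fun j => g (S j x)) atTop
    (nhds ((ν[g | invariantSigmaAlgebra S]) x))

theorem AveragesConvergeAE.congr (hS : IsMeasurePreservingAction S ν) {g g' : Ω → ℝ}
    (hg : AveragesConvergeAE S ν g) (h : g =ᵐ[ν] g') : AveragesConvergeAE S ν g' := by
  filter_upwards [hg, hS.ae_forall h, condExp_congr_ae (m := invariantSigmaAlgebra S) h]
    with x hx hxS hxE
  simpa only [← hxS, ← hxE] using hx

theorem AveragesConvergeAE.add {g g' : Ω → ℝ} (hgi : Integrable g ν) (hgi' : Integrable g' ν)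
    (hg : AveragesConvergeAE S ν g) (hg' : AveragesConvergeAE S ν g') :
    AveragesConvergeAE S ν (g + g') := by
  filter_upwards [hg, hg', condExp_add hgi hgi' (invariantSigmaAlgebra S)] with x hx hx' hxE
  rw [hxE]
  exact (hx.add hx').congr fun n => (map_add (boxAverage n) _ _).symm

theorem AveragesConvergeAE.const_smul {g : Ω → ℝ} (c : ℝ) (hg : AveragesConvergeAE S ν g) :
    AveragesConvergeAE S ν (c • g) := by
  filter_upwards [hg, condExp_smul (μ := ν) c g (invariantSigmaAlgebra S)] with x hx hxE
  rw [hxE]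
  exact (hx.const_smul c).congr fun n => (map_smul (boxAverage n) c _).symm

theorem averagesConvergeAE_of_forall_comp_ae_eq [IsFiniteMeasure ν]
    (hS : IsMeasurePreservingAction S ν) {w : Ω → ℝ} (hw : Integrable w ν)
    (hinv : ∀ j, (fun x => w (S j x)) =ᵐ[ν] w) : AveragesConvergeAE S ν w := by
  filter_upwards [condExp_eq_self_of_forall_comp_ae_eq hS hw hinv, ae_all_iff.2 hinv]
    with x hxE hxinv
  simp only [hxE, hxinv]
  refine tendsto_const_nhds.congr' ?_
  filter_upwards [eventually_gt_atTop 0] with n hn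
  exact (boxAverage_const hn _).symm

theorem averagesConvergeAE_sub_comp_of_bounded [IsFiniteMeasure ν]
    (hS : IsMeasurePreservingAction S ν) {h : Ω → ℝ} (hh : Integrable h ν) {C : ℝ}
    (hC : ∀ x, |h x| ≤ C) (j : Fin d → ℤ) :
    AveragesConvergeAE S ν fun x => h x - h (S j x) := by
  have hhj := (hS.measurePreserving j).integrable_comp_of_integrable hh
  filter_upwards [condExp_sub hh hhj (invariantSigmaAlgebra S),
    condExp_comp_invariantSigmaAlgebra hS hh j] with x hxsub hxcomp
  have hxE : (ν[fun x => h x - h (S j x) | invariantSigmaAlgebra S]) x = 0 :=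
    hxsub.trans (sub_eq_zero.2 hxcomp.symm)
  rw [hxE]
  simpa only [add_comm _ j, hS.add_apply] using
    tendsto_boxAverage_sub_translate (fun i => hC (S i x)) j

theorem limsup_edist_boxAverage_condExp_le {g g' : Ω → ℝ} (hg : Integrable g ν)
    (hg' : Integrable g' ν) (hconv : AveragesConvergeAE S ν g') :
    ∀ᵐ x ∂ν, limsup (fun n => edist (boxAverage n fun j => g (S j x))
        ((ν[g | invariantSigmaAlgebra S]) x)) atTop ≤
      maximalFunction S (fun y => ‖(g - g') y‖ₑ) x +
        ‖(ν[g - g' | invariantSigmaAlgebra S]) x‖ₑ := by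
  filter_upwards [hconv, condExp_sub hg hg' (invariantSigmaAlgebra S)] with x hx hxE
  set M := maximalFunction S (fun y => ‖(g - g') y‖ₑ) x
  set e := (ν[g - g' | invariantSigmaAlgebra S]) x
  have hlim := ((tendsto_iff_edist_tendsto_0.1 hx).const_add (M + ‖e‖ₑ)).limsup_eq
  rw [add_zero] at hlim
  refine (limsup_le_limsup (Eventually.of_forall fun n => ?_)).trans_eq hlim
  have hsub : (boxAverage n fun j => g (S j x)) - (ν[g | invariantSigmaAlgebra S]) x =
      (boxAverage n fun j => (g - g') (S j x)) - e +
        ((boxAverage n fun j => g' (S j x)) - (ν[g' | invariantSigmaAlgebra S]) x) := by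
    have : (boxAverage n fun j => (g - g') (S j x)) =
      (boxAverage n fun j => g (S j x)) - boxAverage n fun j => g' (S j x) :=
      map_sub (boxAverage n) _ _
    rw [this, hxE, Pi.sub_apply]
    ring
  simp only [edist_eq_enorm_sub, hsub]
  exact (enorm_add_le _ _).trans (add_le_add_left ((enorm_sub_le).trans
    (add_le_add_left (enorm_boxAverage_le_maximalFunction _ n x) _)) _)

theorem mul_measure_lt_maximalFunction_add_condExp_le (hS : IsMeasurePreservingAction S ν)
    {u : Ω → ℝ} (hu : Integrable u ν) (lam : ENNReal) :
    lam * ν {x | lam + lam < maximalFunction S (fun y => ‖u y‖ₑ) x +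
        ‖(ν[u | invariantSigmaAlgebra S]) x‖ₑ} ≤ (6 ^ d + 1) * eLpNorm u 1 ν := by
  set M := maximalFunction S fun y => ‖u y‖ₑ
  set e := ν[u | invariantSigmaAlgebra S]
  have hM : lam * ν {x | lam < M x} ≤ 6 ^ d * eLpNorm u 1 ν := by
    rw [eLpNorm_one_eq_lintegral_enorm]
    exact mul_measure_lt_maximalFunction_le hS hu.aestronglyMeasurable.enorm lam
  have he : lam * ν {x | lam ≤ ‖e x‖ₑ} ≤ eLpNorm u 1 ν :=
    calc lam * ν {x | lam ≤ ‖e x‖ₑ} ≤ eLpNorm e 1 ν := by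
          rw [eLpNorm_one_eq_lintegral_enorm]
          exact mul_meas_ge_le_lintegral₀ integrable_condExp.aestronglyMeasurable.enorm _
      _ ≤ eLpNorm u 1 ν := eLpNorm_condExp_le_eLpNorm u le_rfl
  have hsub : {x | lam + lam < M x + ‖e x‖ₑ} ⊆ {x | lam < M x} ∪ {x | lam ≤ ‖e x‖ₑ} := by
    intro x hx
    by_contra! h
    simp only [Set.mem_union, Set.mem_ofPred_eq, not_or, not_lt, not_le] at h
    exact hx.not_ge (add_le_add h.1 h.2.le)
  calc lam * ν {x | lam + lam < M x + ‖e x‖ₑ}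
      ≤ lam * ν {x | lam < M x} + lam * ν {x | lam ≤ ‖e x‖ₑ} := by
        rw [← mul_add]
        gcongr
        exact (measure_mono hsub).trans (measure_union_le _ _)
    _ ≤ 6 ^ d * eLpNorm u 1 ν + eLpNorm u 1 ν := add_le_add hM he
    _ = (6 ^ d + 1) * eLpNorm u 1 ν := by rw [add_mul, one_mul]

theorem averagesConvergeAE_of_forall_exists_eLpNorm_sub_le (hS : IsMeasurePreservingAction S ν)
    {g : Ω → ℝ} (hg : Integrable g ν)
    (h : ∀ η : ENNReal, η ≠ 0 → ∃ g', Integrable g' ν ∧ AveragesConvergeAE S ν g' ∧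
      eLpNorm (g - g') 1 ν ≤ η) : AveragesConvergeAE S ν g := by
  set D : Ω → ENNReal := fun x => limsup (fun n => edist (boxAverage n fun j => g (S j x))
    ((ν[g | invariantSigmaAlgebra S]) x)) atTop
  have hweak (lam δ : ENNReal) (hδ : 0 < δ) : lam * ν {x | lam + lam < D x} ≤ δ := by
    obtain ⟨g', hg', hconv, hle⟩ :=
      h (δ / (6 ^ d + 1)) (ENNReal.div_pos hδ.ne' (by finiteness)).ne'
    have hD := limsup_edist_boxAverage_condExp_le hg hg' hconv
    calc lam * ν {x | lam + lam < D x}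
        ≤ lam * ν {x | lam + lam < maximalFunction S (fun y => ‖(g - g') y‖ₑ) x +
            ‖(ν[g - g' | invariantSigmaAlgebra S]) x‖ₑ} := by
          refine mul_le_mul_right (measure_mono_ae ?_) lam
          exact hD.mono fun x hx hlt => lt_of_lt_of_le hlt hx
      _ ≤ (6 ^ d + 1) * eLpNorm (g - g') 1 ν :=
          mul_measure_lt_maximalFunction_add_condExp_le hS (hg.sub hg') lam
      _ ≤ (6 ^ d + 1) * (δ / (6 ^ d + 1)) := by gcongr
      _ ≤ δ := ENNReal.mul_div_le
  have hD0 : essSup D ν ≤ 0 := by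
    refine le_of_forall_gt_imp_ge_of_dense fun c hc => essSup_le_of_ae_le _ (ae_iff.2 ?_)
    have hnull := nonpos_iff_eq_zero.1 (le_of_forall_gt_imp_ge_of_dense (hweak (c / 2)))
    simpa [ENNReal.add_halves, hc.ne'] using hnull
  filter_upwards [ae_le_essSup (f := D) (μ := ν)] with x hx
  exact tendsto_iff_edist_tendsto_0.2 (tendsto_of_le_liminf_of_limsup_le zero_le (hx.trans hD0))

theorem averagesConvergeAE_sub_comp [IsFiniteMeasure ν] (hS : IsMeasurePreservingAction S ν)
    {w : Ω → ℝ} (hw : Integrable w ν) (j : Fin d → ℤ) :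
    AveragesConvergeAE S ν fun x => w x - w (S j x) := by
  have hj := hS.measurePreserving j
  refine averagesConvergeAE_of_forall_exists_eLpNorm_sub_le hS
    (hw.sub (hj.integrable_comp_of_integrable hw)) fun η hη => ?_
  obtain ⟨h, hclose, hhL⟩ := (memLp_one_iff_integrable.2 hw).exists_simpleFunc_eLpNorm_sub_lt
    ENNReal.one_ne_top (ENNReal.half_pos hη).ne'
  obtain ⟨C, hC⟩ := h.exists_forall_norm_le
  have hh : Integrable h ν := memLp_one_iff_integrable.1 hhL
  refine ⟨fun x => h x - h (S j x), hh.sub (hj.integrable_comp_of_integrable hh),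
    averagesConvergeAE_sub_comp_of_bounded hS hh hC j, ?_⟩
  have hmeas : AEStronglyMeasurable (w - ⇑h) ν := (hw.sub hh).aestronglyMeasurable
  calc eLpNorm ((fun x => w x - w (S j x)) - fun x => h x - h (S j x)) 1 ν
      = eLpNorm ((w - ⇑h) - (w - ⇑h) ∘ S j) 1 ν := by
        congr 1
        ext x
        exact sub_sub_sub_comm _ _ _ _
    _ ≤ eLpNorm (w - ⇑h) 1 ν + eLpNorm ((w - ⇑h) ∘ S j) 1 ν :=
        eLpNorm_sub_le hmeas (hmeas.comp_measurePreserving hj) le_rfl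
    _ ≤ η / 2 + η / 2 := by
        rw [eLpNorm_comp_measurePreserving hmeas hj]
        exact add_le_add hclose.le hclose.le
    _ = η := ENNReal.add_halves η

theorem integrable_coeFn_Lp_two [IsFiniteMeasure ν] (w : Lp ℝ 2 ν) : Integrable w ν :=
  (Lp.memLp w).integrable one_le_two

/-- The subspace of `L²` on which the pointwise ergodic theorem holds. -/
def averagesConvergeSubmodule [IsFiniteMeasure ν] (hS : IsMeasurePreservingAction S ν) :
    Submodule ℝ (Lp ℝ 2 ν) where
  carrier := {w | AveragesConvergeAE S ν w}
  add_mem' {w w'} hw hw' :=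
    (hw.add (integrable_coeFn_Lp_two w) (integrable_coeFn_Lp_two w') hw').congr hS
      (Lp.coeFn_add w w').symm
  zero_mem' := (averagesConvergeAE_of_forall_comp_ae_eq hS (integrable_zero Ω ℝ ν)
    fun _ => .rfl).congr hS (Lp.coeFn_zero ℝ 2 ν).symm
  smul_mem' c w hw := (hw.const_smul c).congr hS (Lp.coeFn_smul c w).symm

theorem isClosed_averagesConvergeSubmodule [IsFiniteMeasure ν]
    (hS : IsMeasurePreservingAction S ν) :
    IsClosed (averagesConvergeSubmodule hS : Set (Lp ℝ 2 ν)) := by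
  refine isClosed_of_closure_subset fun w hw =>
    averagesConvergeAE_of_forall_exists_eLpNorm_sub_le hS (integrable_coeFn_Lp_two w)
      fun η hη => ?_
  set C : ENNReal := ν Set.univ ^ (1 / (1 : ENNReal).toReal - 1 / (2 : ENNReal).toReal)
  have hC : C ≠ ⊤ := ENNReal.rpow_ne_top_of_nonneg (by norm_num) (measure_ne_top ν _)
  obtain ⟨v, hv, hwv⟩ := EMetric.mem_closure_iff.1 hw (η / C) (ENNReal.div_pos hη hC)
  refine ⟨v, integrable_coeFn_Lp_two v, hv, ?_⟩
  calc eLpNorm (⇑w - ⇑v) 1 ν ≤ eLpNorm (⇑w - ⇑v) 2 ν * C :=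
        eLpNorm_le_eLpNorm_mul_rpow_measure_univ one_le_two
          ((Lp.aestronglyMeasurable w).sub (Lp.aestronglyMeasurable v))
    _ ≤ η / C * C := by
        rw [← Lp.edist_def]
        gcongr
    _ ≤ η := (mul_comm _ _).trans_le ENNReal.mul_div_le

theorem compMeasurePreserving_eq_self_of_mem_orthogonal [IsFiniteMeasure ν]
    (hS : IsMeasurePreservingAction S ν) {w : Lp ℝ 2 ν} (hw : w ∈ (averagesConvergeSubmodule hS)ᗮ)
    (j : Fin d → ℤ) : Lp.compMeasurePreserving (S j) (hS.measurePreserving j) w = w := by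
  set U := Lp.compMeasurePreserving (S j) (hS.measurePreserving j) w
  have hmem : w - U ∈ averagesConvergeSubmodule hS := by
    refine (averagesConvergeAE_sub_comp hS (integrable_coeFn_Lp_two w) j).congr hS ?_
    filter_upwards [Lp.coeFn_compMeasurePreserving w (hS.measurePreserving j), Lp.coeFn_sub w U]
      with x hxU hxsub
    rw [hxsub, Pi.sub_apply, hxU, Function.comp_apply]
  have horth : inner ℝ (w - U) w = 0 := (Submodule.mem_orthogonal _ _).1 hw _ hmem
  have hnorm : ‖U‖ = ‖w‖ := Lp.norm_compMeasurePreserving w (hS.measurePreserving j)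
  rw [inner_sub_left, real_inner_self_eq_norm_sq, real_inner_comm] at horth
  have hzero : ‖w - U‖ ^ 2 = 0 := by
    rw [norm_sub_sq_real, hnorm]
    linarith
  exact (sub_eq_zero.1 (norm_eq_zero.1 (pow_eq_zero_iff two_ne_zero |>.1 hzero))).symm

theorem averagesConvergeSubmodule_eq_top [IsFiniteMeasure ν]
    (hS : IsMeasurePreservingAction S ν) : averagesConvergeSubmodule hS = ⊤ := by
  have : CompleteSpace (averagesConvergeSubmodule hS) :=
    (isClosed_averagesConvergeSubmodule hS).completeSpace_coe
  refine Submodule.orthogonal_eq_bot_iff.1 (eq_bot_iff.2 fun w hw => ?_)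
  have hmem : w ∈ averagesConvergeSubmodule hS := by
    refine averagesConvergeAE_of_forall_comp_ae_eq hS (integrable_coeFn_Lp_two w) fun j => ?_
    have hcomp := Lp.coeFn_compMeasurePreserving w (hS.measurePreserving j)
    rw [compMeasurePreserving_eq_self_of_mem_orthogonal hS hw j] at hcomp
    exact hcomp.symm
  exact inner_self_eq_zero.1 ((Submodule.mem_orthogonal _ _).1 hw w hmem)

theorem averagesConvergeAE_of_integrable [IsFiniteMeasure ν]
    (hS : IsMeasurePreservingAction S ν) {g : Ω → ℝ} (hg : Integrable g ν) :
    AveragesConvergeAE S ν g := by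
  refine averagesConvergeAE_of_forall_exists_eLpNorm_sub_le hS hg fun η hη => ?_
  obtain ⟨h, hclose, hh⟩ := (memLp_one_iff_integrable.2 hg).exists_simpleFunc_eLpNorm_sub_lt
    ENNReal.one_ne_top hη
  have hL2 : MemLp h 2 ν := h.memLp_of_isFiniteMeasure 2 ν
  have hmem : hL2.toLp ∈ averagesConvergeSubmodule hS :=
    averagesConvergeSubmodule_eq_top hS ▸ Submodule.mem_top
  exact ⟨h, memLp_one_iff_integrable.1 hh, hmem.congr hS hL2.coeFn_toLp, hclose.le⟩

theorem IsErgodicAction.ae_tendsto_boxAverage [IsProbabilityMeasure ν] (hS : IsErgodicAction S ν)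
    {g : Ω → ℝ} (hg : Integrable g ν) :
    ∀ᵐ x ∂ν, Tendsto (fun n => boxAverage n fun j => g (S j x)) atTop (nhds (∫ y, g y ∂ν)) := by
  obtain ⟨c, hc⟩ : ∃ c : ℝ, ν[g | invariantSigmaAlgebra S] =ᵐ[ν] fun _ => c := by
    refine exists_eventuallyEq_const_of_forall_separating MeasurableSet fun U hU => ?_
    obtain ⟨hmeas, hinv⟩ := measurableSet_invariantSigmaAlgebra.1
      (stronglyMeasurable_condExp.measurable hU : MeasurableSet[invariantSigmaAlgebra S]
        ((ν[g | invariantSigmaAlgebra S]) ⁻¹' U))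
    exact (hS.measure_eq_zero_or_one _ hmeas hinv).symm.imp (mem_ae_iff_prob_eq_one hmeas).2
      measure_eq_zero_iff_ae_notMem.1
  have hcint : c = ∫ y, g y ∂ν := by
    rw [← integral_condExp (invariantSigmaAlgebra_le (S := S)) (f := g), integral_congr_ae hc,
      integral_const, probReal_univ, one_smul]
  filter_upwards [averagesConvergeAE_of_integrable hS.toIsMeasurePreservingAction hg, hc]
    with x hx hxc
  rwa [hxc, hcint] at hx

end PointwiseErgodicTheorem

section Pseudometrics

variable {d : ℕ}

theorem upperDensity_eq_limsup_boxAverage (A : Set (Fin d → ℤ)) :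
    upperDensity d A = limsup (fun n => boxAverage n (A.indicator 1)) atTop := by
  simp only [upperDensity, boxAverage_apply, Set.indicator_apply, Pi.one_apply, Finset.sum_boole]

theorem boxAverage_indicator_mem_Icc (A : Set (Fin d → ℤ)) (n : ℕ) :
    boxAverage n (A.indicator 1) ∈ Set.Icc (0 : ℝ) 1 := by
  refine ⟨boxAverage_nonneg n fun j => Set.indicator_nonneg (fun _ _ => zero_le_one) j, ?_⟩
  rw [boxAverage_apply]
  refine div_le_one_of_le₀ ?_ (Nat.cast_nonneg _)
  simp only [Set.indicator_apply, Pi.one_apply, Finset.sum_boole]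
  exact_mod_cast Finset.card_filter_le _ _

theorem upperDensity_le_of_eventually {A : Set (Fin d → ℤ)} {c : ℝ}
    (h : ∀ᶠ n in atTop, boxAverage n (A.indicator 1) ≤ c) : upperDensity d A ≤ c := by
  rw [upperDensity_eq_limsup_boxAverage]
  exact limsup_le_of_le (isCoboundedUnder_le_of_le atTop fun n =>
    (boxAverage_indicator_mem_Icc A n).1) h

theorem eventually_lt_of_upperDensity_lt {A : Set (Fin d → ℤ)} {c : ℝ}
    (h : upperDensity d A < c) : ∀ᶠ n in atTop, boxAverage n (A.indicator 1) < c := by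
  rw [upperDensity_eq_limsup_boxAverage] at h
  exact eventually_lt_of_limsup_lt h (isBoundedUnder_of ⟨1, fun n =>
    (boxAverage_indicator_mem_Icc A n).2⟩)

theorem upperDensity_le_one (A : Set (Fin d → ℤ)) : upperDensity d A ≤ 1 :=
  upperDensity_le_of_eventually (Eventually.of_forall fun n => (boxAverage_indicator_mem_Icc A n).2)

theorem upperDensity_mono {A B : Set (Fin d → ℤ)} (h : A ⊆ B) :
    upperDensity d A ≤ upperDensity d B :=
  le_of_forall_gt_imp_ge_of_dense fun _ hc => upperDensity_le_of_eventually <|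
    (eventually_lt_of_upperDensity_lt hc).mono fun n hn =>
      (boxAverage_mono n (Set.indicator_le_indicator_of_subset h fun _ => zero_le_one)).trans hn.le

theorem upperDensity_le_upperDensity_translate (A : Set (Fin d → ℤ)) (j : Fin d → ℤ) :
    upperDensity d A ≤ upperDensity d {i | i + j ∈ A} := by
  refine le_of_forall_gt_imp_ge_of_dense fun c hc => upperDensity_le_of_eventually ?_
  obtain ⟨c', hc', hcc'⟩ := exists_between hc
  have hlim := tendsto_boxAverage_sub_translate (a := A.indicator 1) (C := 1)
    (fun i => by by_cases hi : i ∈ A <;> simp [hi]) j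
  filter_upwards [eventually_lt_of_upperDensity_lt hc', hlim.eventually_lt_const (sub_pos.2 hcc')]
    with n hn hn'
  have hsub : (boxAverage n fun i => A.indicator 1 i - A.indicator 1 (i + j)) =
      boxAverage n (A.indicator 1) - boxAverage n ({i | i + j ∈ A}.indicator 1) :=
    map_sub (boxAverage n) _ _
  linarith

theorem upperDensity_translate (A : Set (Fin d → ℤ)) (j : Fin d → ℤ) :
    upperDensity d {i | i + j ∈ A} = upperDensity d A := by
  refine le_antisymm ?_ (upperDensity_le_upperDensity_translate A j)
  simpa using upperDensity_le_upperDensity_translate {i | i + j ∈ A} (-j)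

variable {T : (Fin d → ℤ) → X → X} {f : X → ℂ} {x y : X}

theorem bddBelow_rhoF_set :
    BddBelow {ε : ℝ | 0 < ε ∧ upperDensity d {i | ε < ‖f (T i x) - f (T i y)‖} < ε} :=
  ⟨0, fun _ hε => hε.1.le⟩

theorem rhoF_le {ε : ℝ} (hε : 0 < ε)
    (h : upperDensity d {i | ε < ‖f (T i x) - f (T i y)‖} < ε) : rhoF T f x y ≤ ε :=
  csInf_le bddBelow_rhoF_set ⟨hε, h⟩

theorem upperDensity_lt_of_rhoF_lt {ε : ℝ} (h : rhoF T f x y < ε) :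
    upperDensity d {i | ε < ‖f (T i x) - f (T i y)‖} < ε := by
  have hne : {ε : ℝ | 0 < ε ∧ upperDensity d {i | ε < ‖f (T i x) - f (T i y)‖} < ε}.Nonempty :=
    ⟨2, two_pos, (upperDensity_le_one _).trans_lt one_lt_two⟩
  obtain ⟨ε', ⟨-, hε'⟩, hlt⟩ := exists_lt_of_csInf_lt hne h
  exact (upperDensity_mono fun i hi => hlt.trans hi).trans_lt (hε'.trans hlt)

theorem rhoF_apply_apply (hT : ∀ i j, T (i + j) = T i ∘ T j) (f : X → ℂ) (j : Fin d → ℤ)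
    (x y : X) : rhoF T f (T j x) (T j y) = rhoF T f x y := by
  have htrans (i : Fin d → ℤ) (z : X) : T i (T j z) = T (i + j) z := (congrFun (hT i j) z).symm
  have hdens (ε : ℝ) : upperDensity d {i | ε < ‖f (T (i + j) x) - f (T (i + j) y)‖} =
      upperDensity d {i | ε < ‖f (T i x) - f (T i y)‖} :=
    upperDensity_translate {i | ε < ‖f (T i x) - f (T i y)‖} j
  simp only [rhoF, htrans, hdens]

/-- The averaged square distance `(1/|F_n|) Σ_{j∈F_n} |f(T^j x) − f(T^j y)|²`, whose upper limit
is `d_f(x,y)²`. -/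
def meanSqDist (T : (Fin d → ℤ) → X → X) (f : X → ℂ) (x y : X) (n : ℕ) : ℝ :=
  boxAverage n fun j => ‖f (T j x) - f (T j y)‖ ^ 2

theorem boxAverage_norm_sub_sq_le (u v : (Fin d → ℤ) → ℂ) (n : ℕ) :
    (boxAverage n fun j => ‖u j - v j‖ ^ 2) ≤
      2 * ((boxAverage n fun j => ‖u j‖ ^ 2) + boxAverage n fun j => ‖v j‖ ^ 2) := by
  have hadd : (boxAverage n fun j => 2 * (‖u j‖ ^ 2 + ‖v j‖ ^ 2)) =
      2 * ((boxAverage n fun j => ‖u j‖ ^ 2) + boxAverage n fun j => ‖v j‖ ^ 2) := by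
    rw [← map_add, ← smul_eq_mul, ← map_smul]
    rfl
  refine (boxAverage_mono n fun j => ?_).trans_eq hadd
  calc ‖u j - v j‖ ^ 2 ≤ (‖u j‖ + ‖v j‖) ^ 2 := by gcongr; exact norm_sub_le _ _
    _ ≤ 2 * (‖u j‖ ^ 2 + ‖v j‖ ^ 2) := add_sq_le

theorem meanSqDist_le_two_mul_add (T : (Fin d → ℤ) → X → X) (f : X → ℂ) (x y z : X) (n : ℕ) :
    meanSqDist T f x y n ≤ 2 * (meanSqDist T f z x n + meanSqDist T f z y n) := by
  have h := boxAverage_norm_sub_sq_le (fun j => f (T j z) - f (T j y))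
    (fun j => f (T j z) - f (T j x)) n
  simp only [sub_sub_sub_cancel_left] at h
  rwa [add_comm] at h

theorem isBoundedUnder_meanSqDist [MeasurableSpace X] {μ : Measure X} (hx : genericSq μ T f x)
    (hy : genericSq μ T f y) : IsBoundedUnder (· ≤ ·) atTop (meanSqDist T f x y) :=
  ((hx.add hy).const_mul 2).isBoundedUnder_le.mono_le
    (Eventually.of_forall fun n => boxAverage_norm_sub_sq_le _ _ n)

theorem dF_le_sqrt_of_eventually {c : ℝ} (h : ∀ᶠ n in atTop, meanSqDist T f x y n ≤ c) :
    dF T f x y ≤ √c :=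
  limsup_le_of_le (isCoboundedUnder_le_of_le atTop fun _ => Real.sqrt_nonneg _)
    (h.mono fun _ hn => Real.sqrt_le_sqrt hn)

theorem eventually_meanSqDist_le_of_dF_lt [MeasurableSpace X] {μ : Measure X}
    (hx : genericSq μ T f x) (hy : genericSq μ T f y) {c : ℝ} (h : dF T f x y < √c) :
    ∀ᶠ n in atTop, meanSqDist T f x y n < c := by
  have hbdd : IsBoundedUnder (· ≤ ·) atTop fun n => √(meanSqDist T f x y n) := by
    obtain ⟨b, hb⟩ := isBoundedUnder_meanSqDist hx hy
    exact ⟨√b, eventually_map.2 ((eventually_map.1 hb).mono fun n hn => Real.sqrt_le_sqrt hn)⟩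
  exact (eventually_lt_of_limsup_lt h hbdd).mono fun n hn =>
    lt_imp_lt_of_le_imp_le Real.sqrt_le_sqrt hn

theorem rhoF_le_of_eventually_meanSqDist_le {c ε : ℝ} (hε : 0 < ε) (hc : c < ε ^ 3)
    (h : ∀ᶠ n in atTop, meanSqDist T f x y n ≤ c) : rhoF T f x y ≤ ε := by
  refine rhoF_le hε (lt_of_le_of_lt (upperDensity_le_of_eventually (c := (ε ^ 2)⁻¹ * c) ?_) ?_)
  · filter_upwards [h] with n hn
    have hmarkov (j : Fin d → ℤ) : {i | ε < ‖f (T i x) - f (T i y)‖}.indicator 1 j ≤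
        (ε ^ 2)⁻¹ * ‖f (T j x) - f (T j y)‖ ^ 2 := by
      refine Set.indicator_apply_le' (fun hj => ?_) fun _ => by positivity
      rw [Pi.one_apply, le_inv_mul_iff₀ (by positivity), mul_one]
      exact pow_le_pow_left₀ hε.le (le_of_lt hj) 2
    calc boxAverage n ({i | ε < ‖f (T i x) - f (T i y)‖}.indicator 1)
        ≤ (ε ^ 2)⁻¹ * meanSqDist T f x y n :=
          (boxAverage_mono n hmarkov).trans_eq (map_smul (boxAverage n) (ε ^ 2)⁻¹ _)
      _ ≤ (ε ^ 2)⁻¹ * c := by gcongr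
  · rw [inv_mul_lt_iff₀ (by positivity)]
    linarith [pow_succ ε 2]

end Pseudometrics

section Lusin

theorem exists_measurable_forall_mem {X ι : Type*} [MeasurableSpace X] [Countable ι] [Nonempty ι]
    [MeasurableSpace ι] {D : ι → Set X} (hD : ∀ i, MeasurableSet (D i)) :
    ∃ κ : X → ι, Measurable κ ∧ ∀ x ∈ ⋃ i, D i, x ∈ D (κ x) := by
  obtain ⟨e, he⟩ := exists_surjective_nat ι
  obtain ⟨κ, hκ, hκe⟩ := exists_measurable_piecewise (disjointed fun n => D (e n))
    (fun n => .disjointed (fun n => hD (e n)) n) (fun n _ => e n) (fun _ => measurable_const)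
    (fun m n hmn x hx => absurd hx.2 (Set.disjoint_left.1 (disjoint_disjointed _ hmn) hx.1))
  refine ⟨κ, hκ, fun x hx => ?_⟩
  rw [← he.iUnion_comp, ← iUnion_disjointed] at hx
  obtain ⟨n, hn⟩ := Set.mem_iUnion.1 hx
  rw [hκe n hn]
  exact disjointed_subset _ n hn

variable [TopologicalSpace X] [T2Space X] [MeasurableSpace X] [BorelSpace X]
  {μ : Measure X} [IsFiniteMeasure μ] [μ.InnerRegularCompactLTTop]

theorem exists_isCompact_subset_inter_eq_isOpen_inter {s E : Set X} (hs : MeasurableSet s)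
    (hE : MeasurableSet E) {ε : ENNReal} (hε : ε ≠ 0) :
    ∃ M, IsCompact M ∧ μ (s \ M) ≤ ε ∧ ∃ V, IsOpen V ∧ E ∩ M = V ∩ M := by
  have hε2 : ε / 2 ≠ 0 := (ENNReal.half_pos hε).ne'
  obtain ⟨K, hKE, hK, hμK⟩ :=
    (hs.inter hE).exists_isCompact_sdiff_lt (measure_ne_top μ _) hε2
  obtain ⟨L, hLE, hL, hμL⟩ :=
    (hs.diff hE).exists_isCompact_sdiff_lt (measure_ne_top μ _) hε2
  refine ⟨K ∪ L, hK.union hL, ?_, Lᶜ, hL.isClosed.isOpen_compl, ?_⟩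
  · have hsub : s \ (K ∪ L) ⊆ (s ∩ E) \ K ∪ (s \ E) \ L := fun x ⟨hxs, hx⟩ =>
      (em (x ∈ E)).imp (fun hxE => ⟨⟨hxs, hxE⟩, fun hxK => hx (.inl hxK)⟩)
        fun hxE => ⟨⟨hxs, hxE⟩, fun hxL => hx (.inr hxL)⟩
    calc μ (s \ (K ∪ L)) ≤ μ ((s ∩ E) \ K) + μ ((s \ E) \ L) :=
          (measure_mono hsub).trans (measure_union_le _ _)
      _ ≤ ε / 2 + ε / 2 := by gcongr
      _ = ε := ENNReal.add_halves ε
  · ext x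
    refine and_congr_left fun hx => ⟨fun hxE hxL => (hLE hxL).2 hxE, fun hxL => ?_⟩
    exact (hKE (hx.resolve_right hxL)).2

theorem exists_isCompact_subset_continuousOn {Y : Type*} [TopologicalSpace Y]
    [SecondCountableTopology Y] [MeasurableSpace Y] [OpensMeasurableSpace Y] {κ : X → Y}
    (hκ : Measurable κ) {s : Set X} (hs : MeasurableSet s) {ε : ENNReal} (hε : ε ≠ 0) :
    ∃ M ⊆ s, IsCompact M ∧ μ (s \ M) ≤ ε ∧ ContinuousOn κ M := by
  have hbasis := TopologicalSpace.isBasis_countableBasis Y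
  have hε2 : ε / 2 ≠ 0 := (ENNReal.half_pos hε).ne'
  obtain ⟨δ, hδ, hδε⟩ :=
    ENNReal.exists_pos_sum_of_countable' hε2 (TopologicalSpace.countableBasis Y)
  obtain ⟨K, hKs, hK, hμK⟩ := hs.exists_isCompact_sdiff_lt (measure_ne_top μ _) hε2
  choose M hM hμM V hV hMV using fun U : TopologicalSpace.countableBasis Y =>
    exists_isCompact_subset_inter_eq_isOpen_inter (μ := μ) hs
      (hκ (hbasis.isOpen U.2).measurableSet) (hδ U).ne'
  refine ⟨K ∩ ⋂ U, M U, Set.inter_subset_left.trans hKs,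
    hK.inter_right (isClosed_iInter fun U => (hM U).isClosed), ?_, ?_⟩
  · calc μ (s \ (K ∩ ⋂ U, M U)) ≤ μ (s \ K) + μ (⋃ U, s \ M U) := by
          rw [Set.sdiff_inter, Set.sdiff_iInter]
          exact measure_union_le _ _
      _ ≤ ε / 2 + ∑' U, δ U := by
          gcongr
          exact (measure_iUnion_le _).trans (ENNReal.tsum_le_tsum hμM)
      _ ≤ ε := (add_le_add_right hδε.le _).trans_eq (ENNReal.add_halves ε)
  · rw [continuousOn_iff_continuous_domRestrict, hbasis.continuous_iff]
    intro U hU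
    have hVU : (K ∩ ⋂ U, M U).domRestrict κ ⁻¹' U = Subtype.val ⁻¹' V ⟨U, hU⟩ := by
      ext ⟨x, hx⟩
      have hxM : x ∈ M ⟨U, hU⟩ := Set.mem_iInter.1 hx.2 _
      exact ⟨fun h => ((hMV ⟨U, hU⟩).subset ⟨h, hxM⟩).1, fun h =>
        ((hMV ⟨U, hU⟩).superset ⟨h, hxM⟩).1⟩
    rw [hVU]
    exact (hV _).preimage continuous_subtype_val

end Lusin

section SmallSets

variable [MeasurableSpace X] {d : ℕ} {T : (Fin d → ℤ) → X → X} {μ : Measure X}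
  {f : X → ℂ}

/-- For every `ε > 0` some set of positive measure has `ρ_f`-diameter at most `ε`. Each of the
three properties compared in the theorem is shown to be equivalent to this one. -/
def HasRhoSmallSets (μ : Measure X) (T : (Fin d → ℤ) → X → X) (f : X → ℂ) : Prop :=
  ∀ ε : ℝ, 0 < ε → ∃ A : Set X, MeasurableSet A ∧ 0 < μ A ∧ ∀ x ∈ A, ∀ y ∈ A, rhoF T f x y ≤ ε

theorem ae_genericSq [IsProbabilityMeasure μ] (hT : IsErgodicAction T μ) (hf : MemLp f 2 μ) :
    ∀ᵐ x ∂μ, genericSq μ T f x :=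
  hT.ae_tendsto_boxAverage hf.norm.integrable_sq

theorem rhoF_le_of_dF_lt {x y : X} (hx : genericSq μ T f x) (hy : genericSq μ T f y) {ε : ℝ}
    (hε : 0 < ε) (h : dF T f x y < √(ε ^ 3 / 2)) : rhoF T f x y ≤ ε :=
  rhoF_le_of_eventually_meanSqDist_le hε (half_lt_self (by positivity))
    ((eventually_meanSqDist_le_of_dF_lt hx hy h).mono fun _ hn => hn.le)

theorem hasRhoSmallSets_of_not_meanSensitiveFun [IsProbabilityMeasure μ]
    (hT : IsErgodicAction T μ) (hf : MemLp f 2 μ) (h : ¬ MeanSensitiveFun μ T f) :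
    HasRhoSmallSets μ T f := by
  intro ε hε
  have hη : 0 < √(ε ^ 3 / 2) := by positivity
  obtain ⟨A, hA, hpos, hdF⟩ : ∃ A, MeasurableSet A ∧ 0 < μ A ∧ ∀ x ∈ A, ∀ y ∈ A,
      genericSq μ T f x → genericSq μ T f y → dF T f x y ≤ √(ε ^ 3 / 2) / 2 := by
    have hsens : ¬ SensitivityConstant μ T f (√(ε ^ 3 / 2) / 2) := fun hs => h ⟨_, hs⟩
    simp only [SensitivityConstant, half_pos hη, true_and] at hsens
    push Not at hsens
    exact hsens
  obtain ⟨B, hBae, hB, hBgen⟩ := (ae_genericSq hT hf).exists_measurable_mem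
  refine ⟨A ∩ B, hA.inter hB, ?_, fun x hx y hy => ?_⟩
  · rwa [measure_inter_conull (mem_ae_iff.1 hBae)]
  · have hx' := hBgen x hx.2
    have hy' := hBgen y hy.2
    exact rhoF_le_of_dF_lt hx' hy' hε
      ((hdF x hx.1 y hy.1 hx' hy').trans_lt (half_lt_self hη))

end SmallSets

section MeanEquicontinuity

variable [MetricSpace X] [MeasurableSpace X] [BorelSpace X] {d : ℕ}
  {T : (Fin d → ℤ) → X → X} {μ : Measure X} {f : X → ℂ}

theorem hasRhoSmallSets_of_muFMeanEquicont [SecondCountableTopology X]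
    (h : MuFMeanEquicont μ T f) : HasRhoSmallSets μ T f := by
  intro ε hε
  obtain ⟨M, hM, hμM, hequi⟩ := h (1 / 2) (by norm_num)
  obtain ⟨δ, hδ, hδM⟩ := hequi ε hε
  have hhalf : 0 < 1 - ENNReal.ofReal (1 / 2) := by simp
  obtain ⟨x, -, hxpos⟩ := exists_mem_forall_mem_nhdsWithin_pos_measure
    (hhalf.trans_le hμM).ne'
  refine ⟨M ∩ ball x (δ / 2), hM.measurableSet.inter isOpen_ball.measurableSet,
    hxpos _ (inter_mem_nhdsWithin M (ball_mem_nhds x (half_pos hδ))), ?_⟩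
  rintro y ⟨hyM, hy⟩ z ⟨hzM, hz⟩
  exact hδM y hyM z hzM (by linarith [dist_triangle_right y z x, mem_ball.1 hy, mem_ball.1 hz])

theorem muFMeanEquicont_of_hasRhoSmallSets [IsProbabilityMeasure μ] [μ.InnerRegularCompactLTTop]
    (hT : IsErgodicAction T μ) (h : HasRhoSmallSets μ T f) : MuFMeanEquicont μ T f := by
  intro τ hτ
  choose A hA hpos hrho using fun n : ℕ => h (1 / (n + 1)) Nat.one_div_pos_of_nat
  choose κ hκ hκA using fun n : ℕ => exists_measurable_forall_mem fun j : Fin d → ℤ =>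
    (hT.measurePreserving j).measurable (hA n)
  obtain ⟨s, hsae, hs, hsA⟩ :=
    (ae_all_iff.2 fun n => hT.ae_exists_mem (hA n) (hpos n)).exists_measurable_mem
  obtain ⟨M, hMs, hM, hμM, hcont⟩ := exists_isCompact_subset_continuousOn (μ := μ)
    (measurable_pi_iff.2 hκ : Measurable fun x n => κ n x) hs (ENNReal.ofReal_pos.2 hτ).ne'
  refine ⟨M, hM, ?_, fun ε hε => ?_⟩
  · rw [tsub_le_iff_right]
    calc 1 = μ s := ((prob_compl_eq_zero_iff hs).1 hsae).symm
      _ ≤ μ (s ∩ M) + μ (s \ M) := measure_le_inter_add_sdiff μ s M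
      _ ≤ μ M + ENNReal.ofReal τ := by
          gcongr
          exact Set.inter_subset_right
  obtain ⟨n, hn⟩ := exists_nat_one_div_lt hε
  have hunif : UniformContinuousOn (κ n) M :=
    hM.uniformContinuousOn_of_continuous ((continuous_apply n).comp_continuousOn hcont)
  obtain ⟨δ, hδ, hδM⟩ := Metric.uniformContinuousOn_iff_le.1 hunif (1 / 2) (by norm_num)
  refine ⟨δ, hδ, fun x hx y hy hxy => ?_⟩
  have hmem (z : X) (hz : z ∈ M) : T (κ n z) z ∈ A n :=
    hκA n z (Set.mem_iUnion.2 (hsA z (hMs hz) n))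
  have hκeq : κ n x = κ n y := by
    refine funext fun k => by_contra fun hk => ?_
    have hdist := (dist_le_pi_dist (κ n x) (κ n y) k).trans (hδM x hx y hy hxy)
    linarith [Int.pairwise_one_le_dist hk]
  have hy' := hmem y hy
  rw [← hκeq] at hy'
  rw [← rhoF_apply_apply hT.add f (κ n x)]
  exact (hrho n _ (hmem x hx) _ hy').trans hn.le

end MeanEquicontinuity

section AlmostPeriodicity

theorem exists_eLpNorm_le_of_unifIntegrable {ι Ω E : Type*} [MeasurableSpace Ω]
    [NormedAddCommGroup E] {ν : Measure Ω} [IsProbabilityMeasure ν] {p : ENNReal} (hp : 1 ≤ p)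
    {g : ι → Ω → E} (hg : ∀ i, AEStronglyMeasurable (g i) ν) (hui : UnifIntegrable g p ν) {ε : ℝ}
    (hε : 0 < ε) : ∃ δ : ℝ, 0 < δ ∧ ∀ i, ν {x | δ < ‖g i x‖} ≤ ENNReal.ofReal δ →
      eLpNorm (g i) p ν ≤ ENNReal.ofReal ε := by
  obtain ⟨δ, hδ, hδε⟩ := hui (half_pos hε)
  refine ⟨min δ (ε / 2), lt_min hδ (half_pos hε), fun i hi => ?_⟩
  set t := toMeasurable ν {x | min δ (ε / 2) < ‖g i x‖}
  have ht : MeasurableSet t := measurableSet_toMeasurable ν _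
  have hlarge : eLpNorm (t.indicator (g i)) p ν ≤ ENNReal.ofReal (ε / 2) := by
    refine hδε i t ht ?_
    rw [measure_toMeasurable]
    exact hi.trans (ENNReal.ofReal_le_ofReal (min_le_left _ _))
  have hsmall : eLpNorm (tᶜ.indicator (g i)) p ν ≤ ENNReal.ofReal (ε / 2) := by
    have hbound (x : Ω) : ‖tᶜ.indicator (g i) x‖ ≤ ε / 2 := by
      rw [Set.indicator_apply]
      split_ifs with hx
      · exact (not_lt.1 fun hlt => hx (subset_toMeasurable ν _ hlt)).trans (min_le_right _ _)
      · rw [norm_zero]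
        exact (half_pos hε).le
    simpa using eLpNorm_le_of_ae_bound (p := p) (μ := ν) (Eventually.of_forall hbound)
  calc eLpNorm (g i) p ν = eLpNorm (t.indicator (g i) + tᶜ.indicator (g i)) p ν := by
        rw [Set.indicator_self_add_compl]
    _ ≤ ENNReal.ofReal (ε / 2) + ENNReal.ofReal (ε / 2) :=
        (eLpNorm_add_le ((hg i).indicator ht) ((hg i).indicator ht.compl) hp).trans
          (add_le_add hlarge hsmall)
    _ = ENNReal.ofReal ε := by
        rw [← ENNReal.ofReal_add (half_pos hε).le (half_pos hε).le, add_halves]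

variable [MeasurableSpace X] {d : ℕ} {T : (Fin d → ℤ) → X → X} {μ : Measure X}
  {f : X → ℂ}

theorem IsErgodicAction.ae_upperDensity_eq [IsProbabilityMeasure μ] (hT : IsErgodicAction T μ)
    {E : Set X} (hE : NullMeasurableSet E μ) :
    ∀ᵐ x ∂μ, upperDensity d {j | T j x ∈ E} = μ.real E := by
  have hint : Integrable (E.indicator (1 : X → ℝ)) μ :=
    (integrable_const (1 : ℝ)).integrableOn.integrable_indicator₀ hE
  have hmean : ∫ x, E.indicator (1 : X → ℝ) x ∂μ = μ.real E := by
    simp [integral_indicator₀ hE]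
  filter_upwards [hT.ae_tendsto_boxAverage hint] with x hx
  rw [upperDensity_eq_limsup_boxAverage, ← hmean]
  exact hx.limsup_eq

theorem ae_forall_measure_le_of_rhoF_lt [IsProbabilityMeasure μ] (hT : IsErgodicAction T μ)
    (hf : AEStronglyMeasurable f μ) (ε : ℝ) :
    ∀ᵐ x ∂μ, ∀ i k, rhoF T f (T i x) (T k x) < ε →
      μ {y | ε < ‖f (T i y) - f (T k y)‖} ≤ ENNReal.ofReal ε := by
  have hcomp (j : Fin d → ℤ) : AEStronglyMeasurable (fun y => f (T j y)) μ :=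
    hf.comp_measurePreserving (hT.measurePreserving j)
  set E : (Fin d → ℤ) → (Fin d → ℤ) → Set X := fun i k => {y | ε < ‖f (T i y) - f (T k y)‖}
  have hE (i k : Fin d → ℤ) : NullMeasurableSet (E i k) μ :=
    nullMeasurableSet_lt aemeasurable_const ((hcomp i).sub (hcomp k)).norm.aemeasurable
  filter_upwards [ae_all_iff.2 fun i => ae_all_iff.2 fun k => hT.ae_upperDensity_eq (hE i k)]
    with x hx i k hrho
  have hcommute (j l : Fin d → ℤ) : T l (T j x) = T j (T l x) := by
    rw [← hT.add_apply, ← hT.add_apply, add_comm]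
  have hset : {l | ε < ‖f (T l (T i x)) - f (T l (T k x))‖} = {l | T l x ∈ E i k} := by
    ext l
    rw [Set.mem_ofPred_eq, hcommute i l, hcommute k l]
    rfl
  have hlt : μ.real (E i k) < ε := by
    rw [← hx i k, ← hset]
    exact upperDensity_lt_of_rhoF_lt hrho
  exact (ofReal_measureReal (measure_ne_top μ _)).symm.trans_le (ENNReal.ofReal_le_ofReal hlt.le)

/-- The orbit `j ↦ f ∘ T^j` in `L²(X,μ)`. -/
def orbitMap (hT : IsMeasurePreservingAction T μ) (hf : MemLp f 2 μ) (j : Fin d → ℤ) : Lp ℂ 2 μ :=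
  (hf.comp_measurePreserving (hT.measurePreserving j)).toLp

theorem edist_orbitMap (hT : IsMeasurePreservingAction T μ) (hf : MemLp f 2 μ)
    (i k : Fin d → ℤ) :
    edist (orbitMap hT hf i) (orbitMap hT hf k) = eLpNorm (f ∘ T i - f ∘ T k) 2 μ :=
  Lp.edist_toLp_toLp _ _ _ _

theorem apFun_iff_totallyBounded (hT : IsMeasurePreservingAction T μ) (hf : MemLp f 2 μ) :
    APFun μ T f ↔ TotallyBounded (Set.range (orbitMap hT hf)) := by
  have horbit : {g : Lp ℂ 2 μ | ∃ j : Fin d → ℤ, (g : X → ℂ) =ᵐ[μ] f ∘ T j} =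
      Set.range (orbitMap hT hf) := by
    ext g
    refine exists_congr fun j => ⟨fun h => Lp.ext ?_, fun h => ?_⟩
    · exact (MemLp.coeFn_toLp _).trans h.symm
    · rw [← h]
      exact MemLp.coeFn_toLp _
  rw [APFun, horbit]
  exact ⟨fun h => h.totallyBounded.subset subset_closure,
    fun h => h.closure.isCompact_of_isClosed isClosed_closure⟩

theorem identDistrib_comp (hT : IsMeasurePreservingAction T μ) {E : Type*} [MeasurableSpace E]
    {g : X → E} (hg : AEMeasurable g μ) (j : Fin d → ℤ) :
    ProbabilityTheory.IdentDistrib (g ∘ T j) g μ μ where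
  aemeasurable_fst := hT.aemeasurable_comp hg j
  aemeasurable_snd := hg
  map_eq := by
    have hj := hT.measurePreserving j
    rw [← AEMeasurable.map_map_of_aemeasurable (by rwa [hj.map_eq]) hj.aemeasurable, hj.map_eq]

theorem unifIntegrable_comp_sub_comp [IsProbabilityMeasure μ]
    (hT : IsMeasurePreservingAction T μ) (hf : MemLp f 2 μ) :
    UnifIntegrable (fun (p : (Fin d → ℤ) × (Fin d → ℤ)) => f ∘ T p.1 - f ∘ T p.2) 2 μ := by
  have hcomp (j : Fin d → ℤ) : MemLp (f ∘ T j) 2 μ :=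
    hf.comp_measurePreserving (hT.measurePreserving j)
  have hident := identDistrib_comp hT hf.aestronglyMeasurable.aemeasurable
  have hui (φ : (Fin d → ℤ) × (Fin d → ℤ) → Fin d → ℤ) :
      UnifIntegrable (fun p => f ∘ T (φ p)) 2 μ :=
    (ProbabilityTheory.MemLp.uniformIntegrable_of_identDistrib (j := 0) one_le_two
      ENNReal.ofNat_ne_top (hcomp _) fun p => (hident _).trans (hident _).symm).unifIntegrable
  exact (hui Prod.fst).sub (hui Prod.snd) one_le_two
    (fun p => (hcomp p.1).aestronglyMeasurable) fun p => (hcomp p.2).aestronglyMeasurable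

theorem exists_edist_orbitMap_le [IsProbabilityMeasure μ] (hT : IsMeasurePreservingAction T μ)
    (hf : MemLp f 2 μ) {ε : ℝ} (hε : 0 < ε) :
    ∃ δ : ℝ, 0 < δ ∧ ∀ i k, μ {x | δ < ‖f (T i x) - f (T k x)‖} ≤ ENNReal.ofReal δ →
      edist (orbitMap hT hf i) (orbitMap hT hf k) ≤ ENNReal.ofReal ε := by
  have hcomp (j : Fin d → ℤ) : MemLp (f ∘ T j) 2 μ :=
    hf.comp_measurePreserving (hT.measurePreserving j)
  obtain ⟨δ, hδ, hδε⟩ := exists_eLpNorm_le_of_unifIntegrable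
    (g := fun (p : (Fin d → ℤ) × (Fin d → ℤ)) => f ∘ T p.1 - f ∘ T p.2) one_le_two
    (fun p => ((hcomp p.1).sub (hcomp p.2)).aestronglyMeasurable)
    (unifIntegrable_comp_sub_comp hT hf) hε
  refine ⟨δ, hδ, fun i k h => ?_⟩
  rw [edist_orbitMap]
  exact hδε (i, k) h

theorem exists_seq_pairwise_le_edist_of_not_totallyBounded {α : Type*} [PseudoEMetricSpace α]
    {s : Set α} (hs : ¬ TotallyBounded s) :
    ∃ ε > 0, ∃ u : ℕ → α, (∀ n, u n ∈ s) ∧ Pairwise fun m n => ε ≤ edist (u m) (u n) := by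
  rw [EMetric.totallyBounded_iff] at hs
  push Not at hs
  obtain ⟨ε, hε, hcover⟩ := hs
  have : Std.Symm fun x y : α => ε ≤ edist x y := ⟨fun x y h => by rwa [edist_comm]⟩
  refine ⟨ε, hε,
    exists_seq_of_forall_finset_exists' (· ∈ s) (fun x y => ε ≤ edist x y) fun t _ => ?_⟩
  obtain ⟨y, hys, hy⟩ := Set.not_subset.1 (hcover t t.finite_toSet)
  refine ⟨y, hys, fun x hx => not_lt.1 fun hlt => hy ?_⟩
  exact Set.mem_biUnion hx (Metric.mem_eball'.2 hlt)

theorem IsMeasurePreservingAction.exists_ne_mem_mem [IsFiniteMeasure μ]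
    (hT : IsMeasurePreservingAction T μ) {A : Set X} (hA : MeasurableSet A) (hpos : 0 < μ A)
    {p : X → Prop} (hp : ∀ᵐ x ∂μ, p x) (j : ℕ → Fin d → ℤ) :
    ∃ m n, m ≠ n ∧ ∃ x, p x ∧ T (j m) x ∈ A ∧ T (j n) x ∈ A := by
  obtain ⟨B, hBae, hB, hBp⟩ := hp.exists_measurable_mem
  have hμ (n : ℕ) : μ (T (j n) ⁻¹' A ∩ B) = μ A := by
    rw [measure_inter_conull (mem_ae_iff.1 hBae),
      (hT.measurePreserving _).measure_preimage hA.nullMeasurableSet]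
  obtain ⟨m, n, hmn, x, ⟨hm, hxB⟩, hn, -⟩ :=
    exists_nonempty_inter_of_measure_univ_lt_tsum_measure μ
      (s := fun n => T (j n) ⁻¹' A ∩ B)
      (fun n => (((hT.measurePreserving _).measurable hA).inter hB).nullMeasurableSet)
      (by simp [hμ, ENNReal.tsum_const_eq_top_of_ne_zero hpos.ne', measure_lt_top])
  exact ⟨m, n, hmn, x, hBp x hxB, hm, hn⟩

theorem apFun_of_hasRhoSmallSets [IsProbabilityMeasure μ] (hT : IsErgodicAction T μ)
    (hf : MemLp f 2 μ) (h : HasRhoSmallSets μ T f) : APFun μ T f := by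
  have hT' := hT.toIsMeasurePreservingAction
  rw [apFun_iff_totallyBounded hT' hf]
  by_contra hTB
  obtain ⟨η, hη, u, hu, hsep⟩ := exists_seq_pairwise_le_edist_of_not_totallyBounded hTB
  choose j hj using hu
  obtain ⟨ε, hε, hεη⟩ : ∃ ε : ℝ, 0 < ε ∧ ENNReal.ofReal ε < η := by
    obtain ⟨ε, hε, hεη⟩ := ENNReal.lt_iff_exists_nnreal_btwn.1 hη
    exact ⟨ε, by exact_mod_cast hε, by rwa [ENNReal.ofReal_coe_nnreal]⟩
  obtain ⟨δ, hδ, hδε⟩ := exists_edist_orbitMap_le hT' hf hε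
  obtain ⟨A, hA, hpos, hrho⟩ := h (δ / 2) (half_pos hδ)
  obtain ⟨m, n, hmn, x, hx, hm, hn⟩ := hT'.exists_ne_mem_mem hA hpos
    (ae_forall_measure_le_of_rhoF_lt hT hf.aestronglyMeasurable δ) j
  have hclose : edist (u m) (u n) ≤ ENNReal.ofReal ε := by
    rw [← hj m, ← hj n]
    exact hδε _ _ (hx _ _ ((hrho _ hm _ hn).trans_lt (half_lt_self hδ)))
  exact (hsep hmn).not_gt (hclose.trans_lt hεη)

end AlmostPeriodicity

section Coupling

variable [MeasurableSpace X] {μ : Measure X}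

/-- The coupling of `μ` with itself that draws a cell of the partition `(C k)` according to `μ`
and then two points of that cell independently. -/
def partitionCoupling {ι : Type*} (μ : Measure X) (C : ι → Set X) : Measure (X × X) :=
  Measure.sum fun k => (μ (C k))⁻¹ • (μ.restrict (C k)).prod (μ.restrict (C k))

theorem map_partitionCoupling {ι : Type*} [Countable ι] [IsFiniteMeasure μ] {C : ι → Set X}
    (hC : ∀ k, MeasurableSet (C k)) (hdisj : Pairwise (Function.onFun Disjoint C))
    (hcover : ⋃ k, C k = Set.univ) {π : X × X → X} (hπ : Measurable π)
    (hmap : ∀ ν : Measure X, IsFiniteMeasure ν → (ν.prod ν).map π = ν Set.univ • ν) :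
    (partitionCoupling μ C).map π = μ := by
  have hcell (k : ι) : ((μ (C k))⁻¹ • (μ.restrict (C k)).prod (μ.restrict (C k))).map π =
      μ.restrict (C k) := by
    rw [Measure.map_smul, hmap _ inferInstance, Measure.restrict_apply_univ, smul_smul]
    rcases eq_or_ne (μ (C k)) 0 with h0 | h0
    · rw [Measure.restrict_eq_zero.2 h0, smul_zero]
    · rw [ENNReal.inv_mul_cancel h0 (measure_ne_top μ _), one_smul]
  rw [partitionCoupling, Measure.map_sum hπ.aemeasurable]
  simp only [hcell]
  rw [← Measure.restrict_iUnion hdisj hC, hcover, Measure.restrict_univ]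

theorem partitionCoupling_absolutelyContinuous [SFinite μ] {ι : Type*} (C : ι → Set X) :
    partitionCoupling μ C ≪ μ.prod μ := by
  refine Measure.absolutelyContinuous_sum_left fun k => ?_
  rw [Measure.prod_restrict]
  exact Measure.restrict_le_self.absolutelyContinuous.smul_left _

theorem ae_exists_mem_partitionCoupling [SFinite μ] {ι : Type*} [Countable ι] {C : ι → Set X}
    (hC : ∀ k, MeasurableSet (C k)) :
    ∀ᵐ p ∂partitionCoupling μ C, ∃ k, p.1 ∈ C k ∧ p.2 ∈ C k := by
  refine Measure.ae_sum_iff.2 fun k => Measure.ae_smul_measure ?_ _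
  rw [Measure.prod_restrict]
  exact (ae_restrict_mem ((hC k).prod (hC k))).mono fun p hp => ⟨k, hp⟩

theorem exists_coupling_dist_le [IsFiniteMeasure μ] {E : Type*} [PseudoMetricSpace E]
    [TopologicalSpace.SeparableSpace E] [Nonempty E] [MeasurableSpace E] [OpensMeasurableSpace E]
    {G : X → E} (hG : Measurable G) {ε : ℝ} (hε : 0 < ε) :
    ∃ ρ : Measure (X × X), MeasurePreserving Prod.fst ρ μ ∧ MeasurePreserving Prod.snd ρ μ ∧
      ρ ≪ μ.prod μ ∧ ∀ᵐ p ∂ρ, dist (G p.1) (G p.2) ≤ ε := by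
  obtain ⟨κ, hκ, hκG⟩ := exists_measurable_forall_mem fun n : ℕ =>
    hG (measurableSet_ball (x := TopologicalSpace.denseSeq E n) (ε := ε / 2))
  have hG_ball (x : X) : G x ∈ ball (TopologicalSpace.denseSeq E (κ x)) (ε / 2) := by
    obtain ⟨n, hn⟩ :=
      (TopologicalSpace.denseRange_denseSeq E).exists_dist_lt (G x) (half_pos hε)
    exact hκG x (Set.mem_iUnion.2 ⟨n, hn⟩)
  set C : ℕ → Set X := fun k => κ ⁻¹' {k}
  have hC (k : ℕ) : MeasurableSet (C k) := hκ (measurableSet_singleton k)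
  have hdisj : Pairwise (Function.onFun Disjoint C) := pairwise_disjoint_fiber κ
  have hcover : ⋃ k, C k = Set.univ := Set.iUnion_eq_univ_iff.2 fun x => ⟨κ x, rfl⟩
  refine ⟨partitionCoupling μ C, ⟨measurable_fst, ?_⟩, ⟨measurable_snd, ?_⟩,
    partitionCoupling_absolutelyContinuous C, ?_⟩
  · exact map_partitionCoupling hC hdisj hcover measurable_fst fun _ _ => Measure.map_fst_prod
  · exact map_partitionCoupling hC hdisj hcover measurable_snd fun _ _ => Measure.map_snd_prod
  filter_upwards [ae_exists_mem_partitionCoupling hC] with p hp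
  obtain ⟨k, h1, h2⟩ := hp
  have hκeq : κ p.1 = κ p.2 := Eq.trans h1 (Eq.symm h2)
  have hball := hG_ball p.1
  rw [hκeq] at hball
  linarith [dist_triangle_right (G p.1) (G p.2) (TopologicalSpace.denseSeq E (κ p.2)),
    mem_ball.1 hball, mem_ball.1 (hG_ball p.2)]

theorem eLpNorm_comp_fst_sub_comp_snd_le {E : Type*} [NormedAddCommGroup E] {ρ : Measure (X × X)}
    (hfst : MeasurePreserving Prod.fst ρ μ) (hsnd : MeasurePreserving Prod.snd ρ μ)
    {p : ENNReal} (hp : 1 ≤ p) {u g : X → E} (hu : AEStronglyMeasurable u μ)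
    (hg : AEStronglyMeasurable g μ) :
    eLpNorm (u ∘ Prod.fst - u ∘ Prod.snd) p ρ ≤
      eLpNorm (u - g) p μ + eLpNorm (g ∘ Prod.fst - g ∘ Prod.snd) p ρ + eLpNorm (u - g) p μ := by
  have hu1 := hu.comp_measurePreserving hfst
  have hu2 := hu.comp_measurePreserving hsnd
  have hg1 := hg.comp_measurePreserving hfst
  have hg2 := hg.comp_measurePreserving hsnd
  calc eLpNorm (u ∘ Prod.fst - u ∘ Prod.snd) p ρ
      = eLpNorm ((u - g) ∘ Prod.fst + (g ∘ Prod.fst - g ∘ Prod.snd) - (u - g) ∘ Prod.snd) p ρ := by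
        congr 1
        simp only [Pi.sub_comp]
        abel
    _ ≤ eLpNorm ((u - g) ∘ Prod.fst) p ρ + eLpNorm (g ∘ Prod.fst - g ∘ Prod.snd) p ρ +
          eLpNorm ((u - g) ∘ Prod.snd) p ρ :=
        (eLpNorm_sub_le ((hu1.sub hg1).add (hg1.sub hg2)) (hu2.sub hg2) hp).trans
          (add_le_add_left (eLpNorm_add_le (hu1.sub hg1) (hg1.sub hg2) hp) _)
    _ = eLpNorm (u - g) p μ + eLpNorm (g ∘ Prod.fst - g ∘ Prod.snd) p ρ +
          eLpNorm (u - g) p μ := by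
        rw [eLpNorm_comp_measurePreserving (hu.sub hg) hfst,
          eLpNorm_comp_measurePreserving (hu.sub hg) hsnd]

end Coupling

section MeanSensitivity

variable [MeasurableSpace X] {d : ℕ} {T : (Fin d → ℤ) → X → X} {μ : Measure X}
  {f : X → ℂ}

theorem exists_coupling_eLpNorm_le [IsProbabilityMeasure μ] (hT : IsMeasurePreservingAction T μ)
    (hf : MemLp f 2 μ) (hap : APFun μ T f) {ε : ℝ} (hε : 0 < ε) :
    ∃ ρ : Measure (X × X), IsProbabilityMeasure ρ ∧ ρ ≪ μ.prod μ ∧ ∀ j,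
      eLpNorm ((f ∘ T j) ∘ Prod.fst - (f ∘ T j) ∘ Prod.snd) 2 ρ ≤ ENNReal.ofReal ε := by
  have hε3 : 0 < ε / 3 := by positivity
  obtain ⟨t, ht, hcover⟩ := EMetric.totallyBounded_iff.1 ((apFun_iff_totallyBounded hT hf).1 hap)
    (ENNReal.ofReal (ε / 3)) (ENNReal.ofReal_pos.2 hε3)
  have := ht.fintype
  obtain ⟨ρ, hfst, hsnd, hρ, hclose⟩ := exists_coupling_dist_le (μ := μ)
    (measurable_pi_iff.2 fun g : t => (Lp.stronglyMeasurable g.1).measurable) hε3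
  have hprob : IsProbabilityMeasure ρ :=
    (Measure.isProbabilityMeasure_map_iff hfst.aemeasurable).1
      (by rw [hfst.map_eq]; infer_instance)
  refine ⟨ρ, hprob, hρ, fun j => ?_⟩
  obtain ⟨g, hg, hdist⟩ := Set.mem_iUnion₂.1 (hcover (Set.mem_range_self j))
  have hfj := hf.comp_measurePreserving (hT.measurePreserving j)
  have hfg : eLpNorm (f ∘ T j - ⇑g) 2 μ ≤ ENNReal.ofReal (ε / 3) := by
    rw [← Lp.edist_toLp_toLp _ _ hfj (Lp.memLp g), Lp.toLp_coeFn]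
    exact hdist.le
  have hgg : eLpNorm (g ∘ Prod.fst - g ∘ Prod.snd) 2 ρ ≤ ENNReal.ofReal (ε / 3) := by
    refine (eLpNorm_le_of_ae_bound (C := ε / 3) ?_).trans_eq (by simp)
    filter_upwards [hclose] with p hp
    exact (dist_eq_norm _ _).symm.trans_le ((dist_le_pi_dist _ _ (⟨g, hg⟩ : t)).trans hp)
  calc eLpNorm ((f ∘ T j) ∘ Prod.fst - (f ∘ T j) ∘ Prod.snd) 2 ρ
      ≤ ENNReal.ofReal (ε / 3) + ENNReal.ofReal (ε / 3) + ENNReal.ofReal (ε / 3) :=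
        (eLpNorm_comp_fst_sub_comp_snd_le hfst hsnd one_le_two hfj.aestronglyMeasurable
          (Lp.aestronglyMeasurable g)).trans (add_le_add (add_le_add hfg hgg) hfg)
    _ = ENNReal.ofReal ε := by
        rw [← ENNReal.ofReal_add hε3.le hε3.le, ← ENNReal.ofReal_add (by positivity) hε3.le]
        ring_nf

theorem lintegral_le_of_tendsto_of_forall_lintegral_le {Ω : Type*} [MeasurableSpace Ω]
    {ν : Measure Ω} {g : ℕ → Ω → ENNReal} {g' : Ω → ENNReal} {c : ENNReal}
    (hg : ∀ n, AEMeasurable (g n) ν) (hc : ∀ n, ∫⁻ x, g n x ∂ν ≤ c)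
    (hlim : ∀ᵐ x ∂ν, Tendsto (fun n => g n x) atTop (nhds (g' x))) : ∫⁻ x, g' x ∂ν ≤ c :=
  calc ∫⁻ x, g' x ∂ν = ∫⁻ x, liminf (fun n => g n x) atTop ∂ν :=
        lintegral_congr_ae (hlim.mono fun _ hx => hx.liminf_eq.symm)
    _ ≤ liminf (fun n => ∫⁻ x, g n x ∂ν) atTop := lintegral_liminf_le' hg
    _ ≤ c := liminf_le_of_frequently_le' (Frequently.of_forall hc)

theorem lintegral_boxAverage_le {Ω : Type*} [MeasurableSpace Ω] {ν : Measure Ω}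
    {a : Ω → (Fin d → ℤ) → ℝ} (ha : ∀ j, AEMeasurable (fun x => a x j) ν) (h0 : ∀ x j, 0 ≤ a x j)
    {c : ENNReal} (hc : ∀ j, ∫⁻ x, ENNReal.ofReal (a x j) ∂ν ≤ c) (n : ℕ) :
    ∫⁻ x, ENNReal.ofReal (boxAverage n (a x)) ∂ν ≤ c := by
  simp only [fun x => ofReal_boxAverage n (h0 x), div_eq_mul_inv]
  rw [lintegral_mul_const'' _ (Finset.aemeasurable_fun_sum _ fun j _ => (ha j).ennreal_ofReal),
    lintegral_finsetSum' _ fun j _ => (ha j).ennreal_ofReal, ← div_eq_mul_inv]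
  refine ENNReal.div_le_of_le_mul ((Finset.sum_le_card_nsmul _ _ c fun j _ => hc j).trans_eq ?_)
  rw [nsmul_eq_mul, mul_comm]

theorem exists_measurableSet_forall_mem_prod [SFinite μ] {W : Set (X × X)} (hW : MeasurableSet W)
    (hpos : μ.prod μ W ≠ 0) {P : X × X → Prop} (hP : ∀ᵐ p ∂μ.prod μ, P p) :
    ∃ x, ∃ A, MeasurableSet A ∧ 0 < μ A ∧ ∀ y ∈ A, (x, y) ∈ W ∧ P (x, y) := by
  have hsection : ¬ ∀ᵐ x ∂μ, μ (Prod.mk x ⁻¹' W) = 0 := fun h =>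
    hpos ((Measure.measure_prod_null hW).2 h)
  obtain ⟨x, hx, hPx⟩ :=
    ((not_eventually.1 hsection).and_eventually (Measure.ae_ae_of_ae_prod hP)).exists
  obtain ⟨B, hBae, hB, hBP⟩ := hPx.exists_measurable_mem
  refine ⟨x, Prod.mk x ⁻¹' W ∩ B, (measurable_prodMk_left hW).inter hB, ?_,
    fun y hy => ⟨hy.1, hBP y hy.2⟩⟩
  rw [measure_inter_conull (mem_ae_iff.1 hBae)]
  exact pos_iff_ne_zero.2 hx

theorem lintegral_norm_sq_le_of_eLpNorm_le {Ω E : Type*} [MeasurableSpace Ω] [NormedAddCommGroup E]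
    {ν : Measure Ω} {g : Ω → E} {ε : ℝ} (hε : 0 ≤ ε) (h : eLpNorm g 2 ν ≤ ENNReal.ofReal ε) :
    ∫⁻ x, ENNReal.ofReal (‖g x‖ ^ 2) ∂ν ≤ ENNReal.ofReal (ε ^ 2) := by
  have hsq := eLpNorm_nnreal_pow_eq_lintegral (f := g) (μ := ν) (p := 2) two_ne_zero
  simp only [NNReal.coe_ofNat, ENNReal.rpow_ofNat, ENNReal.coe_ofNat] at hsq
  simp only [ENNReal.ofReal_pow (norm_nonneg _), ofReal_norm, ← hsq, ENNReal.ofReal_pow hε]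
  exact pow_le_pow_left₀ zero_le h 2

theorem exists_tendsto_meanSqDist [IsFiniteMeasure μ] (hT : IsMeasurePreservingAction T μ)
    (hf : MemLp f 2 μ) : ∃ D : X × X → ℝ, Measurable D ∧
      ∀ᵐ p ∂μ.prod μ, Tendsto (meanSqDist T f p.1 p.2) atTop (nhds (D p)) := by
  have hint : Integrable (fun p : X × X => ‖f p.1 - f p.2‖ ^ 2) (μ.prod μ) :=
    ((hf.comp_fst μ).sub (hf.comp_snd μ)).norm.integrable_sq
  have hconv := averagesConvergeAE_of_integrable (hT.prodMap hT) hint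
  exact ⟨_, stronglyMeasurable_condExp.measurable.mono invariantSigmaAlgebra_le le_rfl, hconv⟩

theorem lintegral_le_of_tendsto_meanSqDist (hT : IsMeasurePreservingAction T μ)
    (hf : AEStronglyMeasurable f μ) {ρ : Measure (X × X)} (hρ : ρ ≪ μ.prod μ) {c : ENNReal}
    (h : ∀ j, ∫⁻ p, ENNReal.ofReal (‖f (T j p.1) - f (T j p.2)‖ ^ 2) ∂ρ ≤ c)
    {D : X × X → ℝ}
    (hD : ∀ᵐ p ∂μ.prod μ, Tendsto (meanSqDist T f p.1 p.2) atTop (nhds (D p))) :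
    ∫⁻ p, ENNReal.ofReal (D p) ∂ρ ≤ c := by
  have hmeas (j : Fin d → ℤ) : AEMeasurable (fun p => ‖f (T j p.1) - f (T j p.2)‖ ^ 2) ρ := by
    have hj := hf.comp_measurePreserving (hT.measurePreserving j)
    exact ((hj.comp_fst.sub hj.comp_snd).norm.aemeasurable.pow_const 2).mono_ac hρ
  have havg (n : ℕ) : AEMeasurable (fun p => meanSqDist T f p.1 p.2 n) ρ :=
    (Finset.aemeasurable_fun_sum _ fun j _ => hmeas j).div_const _
  have hint (n : ℕ) : ∫⁻ p, ENNReal.ofReal (meanSqDist T f p.1 p.2 n) ∂ρ ≤ c :=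
    lintegral_boxAverage_le (a := fun (p : X × X) j => ‖f (T j p.1) - f (T j p.2)‖ ^ 2) hmeas
      (fun _ _ => sq_nonneg _) h n
  refine lintegral_le_of_tendsto_of_forall_lintegral_le (fun n => (havg n).ennreal_ofReal) hint ?_
  filter_upwards [hρ.ae_le hD] with p hp
  exact ENNReal.tendsto_ofReal hp

theorem exists_forall_eventually_meanSqDist_le [IsFiniteMeasure μ]
    (hT : IsMeasurePreservingAction T μ) (hf : MemLp f 2 μ) {ρ : Measure (X × X)}
    [IsProbabilityMeasure ρ] (hρ : ρ ≪ μ.prod μ) {c c' : ℝ} (hc : 0 ≤ c) (hcc' : c < c')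
    (h : ∀ j, ∫⁻ p, ENNReal.ofReal (‖f (T j p.1) - f (T j p.2)‖ ^ 2) ∂ρ ≤ ENNReal.ofReal c) :
    ∃ x, ∃ A, MeasurableSet A ∧ 0 < μ A ∧
      ∀ y ∈ A, ∀ᶠ n in atTop, meanSqDist T f x y n ≤ c' := by
  obtain ⟨D, hD, hlim⟩ := exists_tendsto_meanSqDist hT hf
  have hDc := lintegral_le_of_tendsto_meanSqDist hT hf.aestronglyMeasurable hρ h hlim
  have hpos : μ.prod μ {p | D p ≤ c} ≠ 0 := by
    refine fun h0 => (measure_le_lintegral_pos (μ := ρ) hD.ennreal_ofReal.aemeasurable).ne' ?_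
    refine measure_mono_null (fun p hp => ?_) (hρ h0)
    exact (ENNReal.ofReal_le_ofReal_iff hc).1 (le_trans hp hDc)
  obtain ⟨x, A, hA, hApos, hmem⟩ :=
    exists_measurableSet_forall_mem_prod (hD measurableSet_Iic) hpos hlim
  exact ⟨x, A, hA, hApos, fun y hy =>
    (hmem y hy).2.eventually_le_const ((hmem y hy).1.trans_lt hcc')⟩

theorem not_meanSensitiveFun_of_apFun [IsProbabilityMeasure μ]
    (hT : IsMeasurePreservingAction T μ) (hf : MemLp f 2 μ) (hap : APFun μ T f) :
    ¬ MeanSensitiveFun μ T f := by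
  rintro ⟨ε, hε, hsens⟩
  obtain ⟨ρ, hρprob, hρ, hnorm⟩ := exists_coupling_eLpNorm_le hT hf hap (ε := ε / 4) (by positivity)
  obtain ⟨x, A, hA, hpos, hmsd⟩ := exists_forall_eventually_meanSqDist_le hT hf hρ
    (c := (ε / 4) ^ 2) (c' := (ε / 2) ^ 2) (by positivity) (by gcongr; linarith)
    fun j => lintegral_norm_sq_le_of_eLpNorm_le (by positivity) (hnorm j)
  obtain ⟨y, hy, z, hz, -, -, hdF⟩ := hsens A hA hpos
  refine hdF.not_ge ((dF_le_sqrt_of_eventually (c := ε ^ 2) ?_).trans_eq (Real.sqrt_sq hε.le))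
  filter_upwards [hmsd y hy, hmsd z hz] with n hny hnz
  calc meanSqDist T f y z n ≤ 2 * (meanSqDist T f x y n + meanSqDist T f x z n) :=
        meanSqDist_le_two_mul_add T f y z x n
    _ ≤ 2 * ((ε / 2) ^ 2 + (ε / 2) ^ 2) := by gcongr
    _ = ε ^ 2 := by ring

end MeanSensitivity

theorem stmt17_general {d : ℕ}
    [MetricSpace X] [SecondCountableTopology X] [MeasurableSpace X] [BorelSpace X]
    (T : (Fin d → ℤ) → X → X)
    (hTadd : ∀ i j, T (i + j) = T i ∘ T j)
    (μ : Measure X) [IsProbabilityMeasure μ] [μ.InnerRegularCompactLTTop]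
    (hT : ∀ j, MeasurePreserving (T j) μ μ)
    (herg : ∀ A : Set X, MeasurableSet A → (∀ j, T j ⁻¹' A = A) → μ A = 0 ∨ μ A = 1)
    (f : X → ℂ) (hf : MemLp f 2 μ) :
    (APFun μ T f ↔ ¬ MeanSensitiveFun μ T f) ∧
    (¬ MeanSensitiveFun μ T f ↔ MuFMeanEquicont μ T f) := by
  have hErg : IsErgodicAction T μ := ⟨⟨hT, hTadd⟩, herg⟩
  have hAP : APFun μ T f ↔ HasRhoSmallSets μ T f := ⟨fun h =>
    hasRhoSmallSets_of_not_meanSensitiveFun hErg hf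
      (not_meanSensitiveFun_of_apFun hErg.toIsMeasurePreservingAction hf h),
    apFun_of_hasRhoSmallSets hErg hf⟩
  have hMS : ¬ MeanSensitiveFun μ T f ↔ HasRhoSmallSets μ T f :=
    ⟨hasRhoSmallSets_of_not_meanSensitiveFun hErg hf, fun h =>
      not_meanSensitiveFun_of_apFun hErg.toIsMeasurePreservingAction hf (hAP.2 h)⟩
  have hME : MuFMeanEquicont μ T f ↔ HasRhoSmallSets μ T f :=
    ⟨hasRhoSmallSets_of_muFMeanEquicont, muFMeanEquicont_of_hasRhoSmallSets hErg⟩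
  exact ⟨hAP.trans hMS.symm, hMS.trans hME.symm⟩

/-- for a TDS with an ergodic invariant measure `μ`,
`H_ap = H_ms^c = H_me`: `f` is almost periodic iff `f` is not `μ`-mean sensitive iff
`f` is `μ`-mean equicontinuous. -/
theorem stmt17 {d : ℕ}
    [MetricSpace X] [CompactSpace X] [MeasurableSpace X] [BorelSpace X]
    (T : (Fin d → ℤ) → X → X)
    (hTc : ∀ j, Continuous (T j))
    (hTadd : ∀ i j, T (i + j) = T i ∘ T j)
    (μ : Measure X) [IsProbabilityMeasure μ]
    (hT : ∀ j, MeasurePreserving (T j) μ μ)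
    (herg : ∀ A : Set X, MeasurableSet A → (∀ j, T j ⁻¹' A = A) → μ A = 0 ∨ μ A = 1)
    (f : X → ℂ) (hf : MemLp f 2 μ) :
    (APFun μ T f ↔ ¬ MeanSensitiveFun μ T f) ∧
    (¬ MeanSensitiveFun μ T f ↔ MuFMeanEquicont μ T f) :=
  stmt17_general T hTadd μ hT herg f hf
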